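/- arXiv:1502.03085 — 8 statements merged into one kernel-verified Lean document; each statement's English description precedes it below -/
import Mathlib

section
/- For every positive integer m and every real number x, the polynomial P_m(x) = Σ_{k=0}^{m} ((2m+1)/(2k+1))·binom(m+k,2k)·x^k factors as P_m(x) = ∏_{k=1}^{m} (x + 2 − 2·cos(2πk/(2m+1))), and the polynomial Q_m(x) = 2 + Σ_{k=1}^{m} (m/k)·binom(m+k−1,2k−1)·x^k factors as Q_m(x) = ∏_{k=1}^{m} (x + 2 − 2·cos((2k−1)π/(2m))). In particular all roots of P_m and of Q_m are real, simple, and lie in the interval [−4, 0). -/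
open Polynomial Finset Real

/-- `P_m(x) = Σ_{k=0}^{m} ((2m+1)/(2k+1))·binom(m+k,2k)·x^k` as a real polynomial. -/
noncomputable def Ppoly (m : ℕ) : Polynomial ℝ :=
  ∑ k ∈ Finset.range (m + 1),
    Polynomial.C ((2 * m + 1 : ℝ) / (2 * k + 1) * (Nat.choose (m + k) (2 * k))) * Polynomial.X ^ k

/-- `Q_m(x) = 2 + Σ_{k=1}^{m} (m/k)·binom(m+k−1,2k−1)·x^k` as a real polynomial. -/
noncomputable def Qpoly (m : ℕ) : Polynomial ℝ :=
  Polynomial.C 2 + ∑ k ∈ Finset.Icc 1 m,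
    Polynomial.C ((m : ℝ) / k * (Nat.choose (m + k - 1) (2 * k - 1))) * Polynomial.X ^ k

/-!
In the variable `y = x + 2`, `P_m` is `S_m(y) + S_{m-1}(y)` and `Q_m` is `C_m(y)`, where `S` and `C`
are the rescaled Chebyshev polynomials of the second and first kind: since `C_n = S_n - S_{n-2}`,
both identities reduce to reading off the coefficients of `S_n(x + 2)`, which are binomial
coefficients by Pascal's rule. Substituting `y = 2 cos θ` gives
`P_m(x) sin θ = sin ((m + 1)θ) + sin (mθ)` and `Q_m(x) = 2 cos (mθ)`, whose zeros in `(0, π)` are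
`m` explicit angles. As `cos` is injective there, a monic polynomial of degree `m` has no room for
further roots.
-/

section Nodal

variable {R ι : Type*} [CommRing R] [IsDomain R] {s : Finset ι} {v : ι → R} {p : R[X]}

theorem eq_nodal_of_monic_of_natDegree_le_card (hp : p.Monic) (hdeg : p.natDegree ≤ #s)
    (hv : Set.InjOn v s) (hroot : ∀ i ∈ s, p.IsRoot (v i)) : p = Lagrange.nodal s v := by
  classical
  have hcard : #(s.image v) = #s := card_image_of_injOn hv
  have hroots : p.roots = (s.image v).val :=
    roots_eq_of_natDegree_le_card_of_ne_zero (forall_mem_image.2 hroot) (hcard ▸ hdeg) hp.ne_zero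
  have hroots_card : p.roots.card = p.natDegree :=
    le_antisymm p.card_roots' (by rwa [hroots, card_val, hcard])
  rw [← prod_multiset_X_sub_C_of_monic_of_roots_card_eq hp hroots_card, hroots]
  exact prod_image hv

theorem roots_nodal : (Lagrange.nodal s v).roots = s.val.map v := by
  rw [Lagrange.nodal_eq, ← roots_multiset_prod_X_sub_C (s.val.map v), Multiset.map_map]
  rfl

theorem isRoot_nodal_iff {x : R} : (Lagrange.nodal s v).IsRoot x ↔ ∃ i ∈ s, v i = x := by
  rw [← mem_roots Lagrange.nodal_ne_zero, roots_nodal, Multiset.mem_map]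
  rfl

theorem rootMultiplicity_nodal_of_isRoot (hv : Set.InjOn v s) {x : R}
    (hx : (Lagrange.nodal s v).IsRoot x) : (Lagrange.nodal s v).rootMultiplicity x = 1 := by
  classical
  have hnodup : (Lagrange.nodal s v).roots.Nodup := by
    rw [roots_nodal]
    exact s.nodup_map_iff_injOn.2 hv
  rw [← count_roots]
  exact Multiset.count_eq_one_of_mem hnodup ((mem_roots Lagrange.nodal_ne_zero).2 hx)

end Nodal

section CosNodal

/-- The monic real polynomial with roots `2 cos θᵢ - 2`, that is, the nodal polynomial of the
points `2 cos θᵢ` in the variable `x + 2`. -/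
noncomputable def cosNodal {ι : Type*} (s : Finset ι) (θ : ι → ℝ) : ℝ[X] :=
  Lagrange.nodal s fun i ↦ 2 * cos (θ i) - 2

variable {ι : Type*} {s : Finset ι} {θ : ι → ℝ}

theorem injOn_two_mul_cos_sub_two (hθ : Set.MapsTo θ s (Set.Ioo 0 π)) (hinj : Set.InjOn θ s) :
    Set.InjOn (fun i ↦ 2 * cos (θ i) - 2) s := by
  intro i hi j hj hij
  have hcos : cos (θ i) = cos (θ j) := by linarith
  exact hinj hi hj
    (injOn_cos (Set.Ioo_subset_Icc_self (hθ hi)) (Set.Ioo_subset_Icc_self (hθ hj)) hcos)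

theorem two_mul_cos_sub_two_mem_Ico {t : ℝ} (ht : t ∈ Set.Ioo 0 π) :
    2 * cos t - 2 ∈ Set.Ico (-4) 0 := by
  have hlt : cos t < 1 := by
    simpa using cos_lt_cos_of_nonneg_of_le_pi le_rfl ht.2.le ht.1
  constructor <;> linarith [neg_one_le_cos t]

theorem eq_cosNodal_of_monic_of_natDegree_le_card {p : ℝ[X]} (hp : p.Monic)
    (hdeg : p.natDegree ≤ #s) (hθ : Set.MapsTo θ s (Set.Ioo 0 π)) (hinj : Set.InjOn θ s)
    (hroot : ∀ i ∈ s, p.IsRoot (2 * cos (θ i) - 2)) : p = cosNodal s θ :=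
  eq_nodal_of_monic_of_natDegree_le_card hp hdeg (injOn_two_mul_cos_sub_two hθ hinj) hroot

theorem eval_cosNodal (x : ℝ) : (cosNodal s θ).eval x = ∏ i ∈ s, (x + 2 - 2 * cos (θ i)) := by
  simp only [cosNodal, Lagrange.eval_nodal, sub_sub_eq_add_sub]

theorem exists_ofReal_eq_of_isRoot_map_cosNodal {z : ℂ}
    (hz : ((cosNodal s θ).map (algebraMap ℝ ℂ)).IsRoot z) : ∃ x : ℝ, (x : ℂ) = z :=
  have hsplits : (cosNodal s θ).Splits := Splits.prod fun _ _ ↦ Splits.X_sub_C _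
  hsplits.mem_range_of_isRoot Lagrange.nodal_ne_zero hz

theorem mem_Ico_of_isRoot_cosNodal (hθ : Set.MapsTo θ s (Set.Ioo 0 π)) {x : ℝ}
    (hx : (cosNodal s θ).IsRoot x) : x ∈ Set.Ico (-4) 0 := by
  obtain ⟨i, hi, rfl⟩ : ∃ i ∈ s, 2 * cos (θ i) - 2 = x := isRoot_nodal_iff.1 hx
  exact two_mul_cos_sub_two_mem_Ico (hθ hi)

theorem rootMultiplicity_cosNodal_of_isRoot (hθ : Set.MapsTo θ s (Set.Ioo 0 π))
    (hinj : Set.InjOn θ s) {x : ℝ} (hx : (cosNodal s θ).IsRoot x) :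
    (cosNodal s θ).rootMultiplicity x = 1 :=
  rootMultiplicity_nodal_of_isRoot (injOn_two_mul_cos_sub_two hθ hinj) hx

end CosNodal

section Chebyshev

variable (R : Type*) [CommRing R]

theorem chebyshev_C_eq_S_sub_S (n : ℤ) :
    Chebyshev.C R n = Chebyshev.S R n - Chebyshev.S R (n - 2) := by
  linear_combination Chebyshev.C_eq_S_sub_X_mul_S R n + Chebyshev.S_eq R n

theorem choose_add_two_add_choose (n k : ℕ) :
    (n + 2).choose (k + 2) + n.choose (k + 2) = n.choose k + 2 * (n + 1).choose (k + 2) := by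
  simp only [Nat.choose_succ_succ']
  ring

theorem chebyshev_S_comp_X_add_two_rec (n : ℤ) :
    (Chebyshev.S R (n + 2)).comp (X + 2) = X * (Chebyshev.S R (n + 1)).comp (X + 2) +
      2 * (Chebyshev.S R (n + 1)).comp (X + 2) - (Chebyshev.S R n).comp (X + 2) := by
  rw [Chebyshev.S_add_two, sub_comp, mul_comp, X_comp, add_mul]

theorem coeff_chebyshev_S_sub_one_comp_X_add_two (n k : ℕ) :
    ((Chebyshev.S R (n - 1)).comp (X + 2)).coeff k = (n + k).choose (2 * k + 1) := by
  induction n using Nat.twoStepInduction generalizing k with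
  | zero => simp [Nat.choose_eq_zero_of_lt (show k < 2 * k + 1 by lia)]
  | one =>
    rcases k with _ | k
    · simp
    · simp [coeff_one, Nat.choose_eq_zero_of_lt (show 1 + (k + 1) < 2 * (k + 1) + 1 by lia)]
  | more n ih₀ ih₁ =>
    have hrec := chebyshev_S_comp_X_add_two_rec R (n - 1)
    rw [show (n : ℤ) - 1 + 2 = (n + 2 : ℕ) - 1 by lia,
      show (n : ℤ) - 1 + 1 = (n + 1 : ℕ) - 1 by lia] at hrec
    rw [hrec, coeff_sub, coeff_add, coeff_ofNat_mul, ih₀, ih₁]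
    rcases k with _ | k
    · simp only [coeff_X_mul_zero, mul_zero, zero_add, add_zero, Nat.choose_one_right]
      push_cast
      ring
    · have hpascal := congrArg (Nat.cast (R := R))
        (choose_add_two_add_choose (n + k + 1) (2 * k + 1))
      rw [coeff_X_mul, ih₁, show n + 2 + (k + 1) = n + k + 1 + 2 by lia,
        show n + 1 + (k + 1) = n + k + 1 + 1 by lia, show n + (k + 1) = n + k + 1 by lia,
        show n + 1 + k = n + k + 1 by lia, show 2 * (k + 1) + 1 = 2 * k + 1 + 2 by lia]
      push_cast at hpascal
      linear_combination -hpascal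

theorem coeff_chebyshev_C_add_one_comp_X_add_two (n k : ℕ) :
    ((Chebyshev.C R (n + 1)).comp (X + 2)).coeff k =
      (n + 1 + k).choose (2 * k) + (n + k).choose (2 * k) := by
  have hadd := coeff_chebyshev_S_sub_one_comp_X_add_two R (n + 2) k
  have hsub := coeff_chebyshev_S_sub_one_comp_X_add_two R n k
  rw [show ((n + 2 : ℕ) : ℤ) - 1 = n + 1 by lia] at hadd
  rw [chebyshev_C_eq_S_sub_S, sub_comp, coeff_sub, show (n : ℤ) + 1 - 2 = n - 1 by lia, hadd, hsub,
    show n + 2 + k = n + k + 1 + 1 by lia, show n + 1 + k = n + k + 1 by lia]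
  simp only [Nat.choose_succ_succ', Nat.cast_add]
  ring

end Chebyshev

section Coefficients

theorem coeff_Ppoly (m k : ℕ) :
    (Ppoly m).coeff k = (2 * m + 1) / (2 * k + 1) * (m + k).choose (2 * k) := by
  simp only [Ppoly, finsetSum_coeff, coeff_C_mul_X_pow, sum_ite_eq, mem_range]
  split_ifs with hk
  · rfl
  · simp [Nat.choose_eq_zero_of_lt (show m + k < 2 * k by lia)]

theorem coeff_Qpoly_zero (m : ℕ) : (Qpoly m).coeff 0 = 2 := by
  simp [Qpoly]

theorem coeff_Qpoly_add_one (m k : ℕ) :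
    (Qpoly m).coeff (k + 1) = m / (k + 1) * (m + k).choose (2 * k + 1) := by
  simp only [Qpoly, coeff_add, coeff_C_succ, zero_add, finsetSum_coeff, coeff_C_mul_X_pow,
    sum_ite_eq, mem_Icc]
  split_ifs with hk
  · simp [mul_add]
  · simp [Nat.choose_eq_zero_of_lt (show m + k < 2 * k + 1 by lia)]

theorem natDegree_Ppoly_le (m : ℕ) : (Ppoly m).natDegree ≤ m :=
  natDegree_le_iff_coeff_eq_zero.2 fun k hk ↦ by
    simp [coeff_Ppoly, Nat.choose_eq_zero_of_lt (show m + k < 2 * k by lia)]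

theorem natDegree_Qpoly_le (m : ℕ) : (Qpoly m).natDegree ≤ m :=
  natDegree_le_iff_coeff_eq_zero.2 fun k hk ↦ by
    obtain ⟨k, rfl⟩ := Nat.exists_eq_add_one_of_ne_zero (Nat.ne_zero_of_lt hk)
    simp [coeff_Qpoly_add_one, Nat.choose_eq_zero_of_lt (show m + k < 2 * k + 1 by lia)]

theorem monic_Ppoly (m : ℕ) : (Ppoly m).Monic := by
  refine monic_of_natDegree_le_of_coeff_eq_one m (natDegree_Ppoly_le m) ?_
  rw [coeff_Ppoly, ← two_mul, Nat.choose_self, Nat.cast_one, mul_one,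
    div_self (by positivity)]

theorem monic_Qpoly {m : ℕ} (hm : 0 < m) : (Qpoly m).Monic := by
  obtain ⟨n, rfl⟩ := Nat.exists_eq_add_one_of_ne_zero hm.ne'
  refine monic_of_natDegree_le_of_coeff_eq_one (n + 1) (natDegree_Qpoly_le (n + 1)) ?_
  rw [coeff_Qpoly_add_one, show n + 1 + n = 2 * n + 1 by lia, Nat.choose_self]
  push_cast
  field_simp

end Coefficients

section ChebyshevForm

variable {K : Type*} [Field K] [CharZero K]

theorem two_mul_add_one_div_mul_choose (m k : ℕ) :
    (2 * m + 1 : K) / (2 * k + 1) * (m + k).choose (2 * k) =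
      (m + 1 + k).choose (2 * k + 1) + (m + k).choose (2 * k + 1) := by
  have hk : (2 * k + 1 : K) ≠ 0 := by exact_mod_cast (2 * k).succ_ne_zero
  have habsorb := congrArg (Nat.cast (R := K)) (Nat.add_one_mul_choose_eq (m + k) (2 * k))
  have hpascal := congrArg (Nat.cast (R := K)) (Nat.choose_succ_succ' (m + k) (2 * k))
  rw [show m + 1 + k = m + k + 1 by lia]
  push_cast at habsorb hpascal
  field_simp
  linear_combination 2 * habsorb + (2 * k + 1) * hpascal

theorem add_one_div_add_one_mul_choose (n k : ℕ) :
    (n + 1 : K) / (k + 1) * (n + 1 + k).choose (2 * k + 1) =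
      (n + 2 + k).choose (2 * k + 2) + (n + 1 + k).choose (2 * k + 2) := by
  have hk : (k + 1 : K) ≠ 0 := by exact_mod_cast k.succ_ne_zero
  have habsorb := congrArg (Nat.cast (R := K)) (Nat.add_one_mul_choose_eq (n + 1 + k) (2 * k + 1))
  have hpascal := congrArg (Nat.cast (R := K)) (Nat.choose_succ_succ' (n + 1 + k) (2 * k + 1))
  rw [show n + 2 + k = n + 1 + k + 1 by lia]
  push_cast at habsorb hpascal
  field_simp
  linear_combination habsorb + (k + 1) * hpascal

theorem Ppoly_eq_chebyshev_S_add_S_comp (m : ℕ) :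
    Ppoly m = (Chebyshev.S ℝ m + Chebyshev.S ℝ (m - 1)).comp (X + 2) := by
  ext k
  have hS := coeff_chebyshev_S_sub_one_comp_X_add_two ℝ (m + 1) k
  rw [Nat.cast_add_one, add_sub_cancel_right] at hS
  rw [coeff_Ppoly, two_mul_add_one_div_mul_choose, add_comp, coeff_add, hS,
    coeff_chebyshev_S_sub_one_comp_X_add_two]

theorem Qpoly_eq_chebyshev_C_comp (m : ℕ) : Qpoly m = (Chebyshev.C ℝ m).comp (X + 2) := by
  rcases m with _ | n
  · simp [Qpoly, map_ofNat]
  · ext k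
    rw [Nat.cast_add_one, coeff_chebyshev_C_add_one_comp_X_add_two]
    rcases k with _ | k
    · norm_num [coeff_Qpoly_zero]
    · rw [coeff_Qpoly_add_one, Nat.cast_add_one, add_one_div_add_one_mul_choose]
      ring_nf

end ChebyshevForm

section Angles

/-- The angle `θ = 2πk/(2m+1)`; for `1 ≤ k ≤ m`, `2 cos θ - 2` is a root of `Ppoly m`. -/
noncomputable def pAngle (m k : ℕ) : ℝ := 2 * π * k / (2 * m + 1)

/-- The angle `θ = (2k-1)π/(2m)`; for `1 ≤ k ≤ m`, `2 cos θ - 2` is a root of `Qpoly m`. -/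
noncomputable def qAngle (m k : ℕ) : ℝ := (2 * k - 1) * π / (2 * m)

theorem pAngle_injective (m : ℕ) : Function.Injective (pAngle m) := by
  intro i j hij
  simp only [pAngle] at hij
  field_simp at hij
  exact_mod_cast hij

theorem qAngle_injective {m : ℕ} (hm : 0 < m) : Function.Injective (qAngle m) := by
  intro i j hij
  simp only [qAngle] at hij
  field_simp at hij
  simpa using hij

theorem mapsTo_pAngle (m : ℕ) : Set.MapsTo (pAngle m) (Icc 1 m : Finset ℕ) (Set.Ioo 0 π) := by
  intro k hk
  obtain ⟨hk₁, hkm⟩ := Finset.mem_Icc.1 hk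
  have hkm' : (2 * k : ℝ) < 2 * m + 1 := by exact_mod_cast (show 2 * k < 2 * m + 1 by lia)
  refine ⟨by unfold pAngle; positivity, ?_⟩
  rw [pAngle, div_lt_iff₀ (by positivity)]
  linarith [mul_lt_mul_of_pos_left hkm' pi_pos]

theorem mapsTo_qAngle (m : ℕ) : Set.MapsTo (qAngle m) (Icc 1 m : Finset ℕ) (Set.Ioo 0 π) := by
  intro k hk
  obtain ⟨hk₁, hkm⟩ := Finset.mem_Icc.1 hk
  have hm : (0 : ℝ) < m := by exact_mod_cast hk₁.trans hkm
  have hpos : (0 : ℝ) < 2 * k - 1 := by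
    have : (1 : ℝ) ≤ k := by exact_mod_cast hk₁
    linarith
  have hlt : (2 * k - 1 : ℝ) < 2 * m := by
    have : (k : ℝ) ≤ m := by exact_mod_cast hkm
    linarith
  refine ⟨by unfold qAngle; positivity, ?_⟩
  rw [qAngle, div_lt_iff₀ (by positivity)]
  linarith [mul_lt_mul_of_pos_left hlt pi_pos]

end Angles

section Roots

theorem eval_Ppoly_two_mul_cos_sub_two_mul_sin (m : ℕ) (t : ℝ) :
    (Ppoly m).eval (2 * cos t - 2) * sin t = sin ((m + 1) * t) + sin (m * t) := by
  have hS := Chebyshev.S_two_mul_real_cos t m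
  have hS' := Chebyshev.S_two_mul_real_cos t (m - 1)
  push_cast [sub_add_cancel] at hS hS'
  rw [Ppoly_eq_chebyshev_S_add_S_comp, eval_comp, eval_add, eval_add, eval_X, eval_ofNat,
    sub_add_cancel, add_mul, hS, hS']

theorem eval_Qpoly_two_mul_cos_sub_two (m : ℕ) (t : ℝ) :
    (Qpoly m).eval (2 * cos t - 2) = 2 * cos (m * t) := by
  simp [Qpoly_eq_chebyshev_C_comp]

theorem isRoot_Ppoly {m k : ℕ} (hk : k ∈ Icc 1 m) :
    (Ppoly m).IsRoot (2 * cos (pAngle m k) - 2) := by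
  have hsin : sin (pAngle m k) ≠ 0 :=
    (sin_pos_of_mem_Ioo (mapsTo_pAngle m hk)).ne'
  have hangle : (m + 1) * pAngle m k = k * (2 * π) - m * pAngle m k := by
    unfold pAngle
    field_simp
    ring
  have heval := eval_Ppoly_two_mul_cos_sub_two_mul_sin m (pAngle m k)
  rw [hangle, sin_nat_mul_two_pi_sub, neg_add_cancel] at heval
  exact (mul_eq_zero.1 heval).resolve_right hsin

theorem isRoot_Qpoly {m : ℕ} (hm : 0 < m) (k : ℕ) :
    (Qpoly m).IsRoot (2 * cos (qAngle m k) - 2) := by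
  have hangle : m * qAngle m k = k * π - π / 2 := by
    unfold qAngle
    field_simp
  rw [IsRoot, eval_Qpoly_two_mul_cos_sub_two, hangle, cos_sub_pi_div_two, sin_nat_mul_pi, mul_zero]

theorem Ppoly_eq_cosNodal (m : ℕ) : Ppoly m = cosNodal (Icc 1 m) (pAngle m) :=
  eq_cosNodal_of_monic_of_natDegree_le_card (monic_Ppoly m) (by simpa using natDegree_Ppoly_le m)
    (mapsTo_pAngle m) (pAngle_injective m).injOn fun _ ↦ isRoot_Ppoly

theorem Qpoly_eq_cosNodal {m : ℕ} (hm : 0 < m) : Qpoly m = cosNodal (Icc 1 m) (qAngle m) :=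
  eq_cosNodal_of_monic_of_natDegree_le_card (monic_Qpoly hm) (by simpa using natDegree_Qpoly_le m)
    (mapsTo_qAngle m) (qAngle_injective hm).injOn fun k _ ↦ isRoot_Qpoly hm k

end Roots

theorem stmt_0 (m : ℕ) (hm : 0 < m) :
    (∀ x : ℝ, (Ppoly m).eval x =
      ∏ k ∈ Finset.Icc 1 m, (x + 2 - 2 * Real.cos (2 * Real.pi * k / (2 * m + 1)))) ∧
    (∀ x : ℝ, (Qpoly m).eval x =
      ∏ k ∈ Finset.Icc 1 m, (x + 2 - 2 * Real.cos ((2 * k - 1) * Real.pi / (2 * m)))) ∧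
    (∀ z : ℂ, ((Ppoly m).map (algebraMap ℝ ℂ)).IsRoot z → ∃ x : ℝ, (x : ℂ) = z) ∧
    (∀ z : ℂ, ((Qpoly m).map (algebraMap ℝ ℂ)).IsRoot z → ∃ x : ℝ, (x : ℂ) = z) ∧
    (∀ x : ℝ, (Ppoly m).IsRoot x →
      x ∈ Set.Ico (-4 : ℝ) 0 ∧ (Ppoly m).rootMultiplicity x = 1) ∧
    (∀ x : ℝ, (Qpoly m).IsRoot x →
      x ∈ Set.Ico (-4 : ℝ) 0 ∧ (Qpoly m).rootMultiplicity x = 1) := by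
  rw [Ppoly_eq_cosNodal m, Qpoly_eq_cosNodal hm]
  have hP := (pAngle_injective m).injOn (s := (Icc 1 m : Finset ℕ))
  have hQ := (qAngle_injective hm).injOn (s := (Icc 1 m : Finset ℕ))
  exact ⟨eval_cosNodal, eval_cosNodal,
    fun _ ↦ exists_ofReal_eq_of_isRoot_map_cosNodal,
    fun _ ↦ exists_ofReal_eq_of_isRoot_map_cosNodal,
    fun _ hx ↦ ⟨mem_Ico_of_isRoot_cosNodal (mapsTo_pAngle m) hx,
      rootMultiplicity_cosNodal_of_isRoot (mapsTo_pAngle m) hP hx⟩,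
    fun _ hx ↦ ⟨mem_Ico_of_isRoot_cosNodal (mapsTo_qAngle m) hx,
      rootMultiplicity_cosNodal_of_isRoot (mapsTo_qAngle m) hQ hx⟩⟩
end

section
/- Let f, g be the sequences with f(1) = 2, f(2) = −1, g(1) = 1, g(2) = −1 and f(r+2) = −f(r+1) − f(r)/5, g(r+2) = −g(r+1) − g(r)/5 for r ≥ 1, and let φ = (1+√5)/2. Then for every r ≥ 1, |f(r+1)/f(r) + φ/√5| = 1/(√5·(φ^{2r−2} + 1)) and |g(r+1)/g(r) + φ/√5| = 1/(√5·(φ^{2r} − 1)); in particular both sequences of consecutive ratios converge to −φ/√5. -/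
open Real Filter

/-- The interlacing sequence `𝓕_r^{(2,1)}`: `f 1 = 2`, `f 2 = −1`,
`f (r+2) = −f (r+1) − f r / 5` for `r ≥ 1`. (The value at `0` is junk.) -/
def fseq : ℕ → ℚ
  | 0 => 0
  | 1 => 2
  | 2 => -1
  | n + 3 => -fseq (n + 2) - fseq (n + 1) / 5

/-- The interlacing sequence `𝓕_r^{(2,2)}`: `g 1 = 1`, `g 2 = −1`,
`g (r+2) = −g (r+1) − g r / 5` for `r ≥ 1`. (The value at `0` is junk.) -/
def gseq : ℕ → ℚ
  | 0 => 0
  | 1 => 1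
  | 2 => -1
  | n + 3 => -gseq (n + 2) - gseq (n + 1) / 5

/-- The Golden Ratio `φ = (1+√5)/2`. -/
noncomputable def goldenφ : ℝ := (1 + Real.sqrt 5) / 2

/-!
If `u` satisfies `u (n + 2) = (x + y) * u (n + 1) - x * y * u n`, then `u (n + 1) - x * u n` is
geometric of ratio `y`. So `u (n + 1) / u n - x` is a multiple of `y ^ n / u n`, and Binet's formula
evaluates the latter in terms of `(x / y) ^ n`. For `fseq` and `gseq` the characteristic roots are
`x = -φ / √5` and `y = ψ / √5`, with `ψ` the conjugate of `φ`, and `x / y = φ ^ 2`.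
-/

open scoped goldenRatio

/-- The sequence `u` satisfies the second-order linear recurrence with characteristic polynomial
`(X - x) * (X - y)`. Parametrizing by the roots keeps Binet's formula free of square roots. -/
def HasCharRoots {R : Type*} [CommRing R] (x y : R) (u : ℕ → R) : Prop :=
  ∀ n, u (n + 2) = (x + y) * u (n + 1) - x * y * u n

namespace HasCharRoots

section CommRing

variable {R : Type*} [CommRing R] {x y : R} {u : ℕ → R}

theorem symm (hu : HasCharRoots x y u) : HasCharRoots y x u := fun n => by
  rw [hu n, add_comm x y, mul_comm x y]

theorem succ_sub_mul_eq (hu : HasCharRoots x y u) (n : ℕ) :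
    u (n + 1) - x * u n = (u 1 - x * u 0) * y ^ n := by
  induction n with
  | zero => simp
  | succ n ih => linear_combination hu n + y * ih

theorem binet (hu : HasCharRoots x y u) (n : ℕ) :
    (x - y) * u n = (u 1 - y * u 0) * x ^ n - (u 1 - x * u 0) * y ^ n := by
  linear_combination hu.symm.succ_sub_mul_eq n - hu.succ_sub_mul_eq n

end CommRing

theorem div_sub_eq {K : Type*} [Field K] {x y : K} {u : ℕ → K} (hu : HasCharRoots x y u)
    (hy : y ≠ 0) {n : ℕ} (hn : (u 1 - y * u 0) * (x / y) ^ n - (u 1 - x * u 0) ≠ 0) :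
    u (n + 1) / u n - x =
      (x - y) * (u 1 - x * u 0) / ((u 1 - y * u 0) * (x / y) ^ n - (u 1 - x * u 0)) := by
  have hyn : y ^ n ≠ 0 := pow_ne_zero n hy
  have binet_factored :
      (x - y) * u n = y ^ n * ((u 1 - y * u 0) * (x / y) ^ n - (u 1 - x * u 0)) := by
    rw [hu.binet, div_pow]
    field_simp
  have hun : u n ≠ 0 := right_ne_zero_of_mul (binet_factored ▸ mul_ne_zero hyn hn)
  calc u (n + 1) / u n - x = (u 1 - x * u 0) * y ^ n / u n := by
        rw [← hu.succ_sub_mul_eq, sub_div, mul_div_cancel_right₀ _ hun]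
    _ = (x - y) * (u 1 - x * u 0) / ((u 1 - y * u 0) * (x / y) ^ n - (u 1 - x * u 0)) := by
        rw [div_eq_div_iff hun hn]
        linear_combination -(u 1 - x * u 0) * binet_factored

section NormedField

variable {K : Type*} [NormedField K] {x y : K} {u : ℕ → K}

theorem tendsto_div_pow (hu : HasCharRoots x y u) (hxy : ‖y‖ < ‖x‖) :
    Tendsto (fun n => u n / x ^ n) atTop (nhds ((u 1 - y * u 0) / (x - y))) := by
  have hx : x ≠ 0 := norm_pos_iff.mp ((norm_nonneg y).trans_lt hxy)
  have hsub : x - y ≠ 0 := sub_ne_zero.mpr fun h => hxy.ne (h ▸ rfl)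
  have hpow : Tendsto (fun n => (y / x) ^ n) atTop (nhds 0) :=
    tendsto_pow_atTop_nhds_zero_of_norm_lt_one <| by
      rwa [norm_div, div_lt_one (norm_pos_iff.mpr hx)]
  have binet_div (n : ℕ) :
      u n / x ^ n = (u 1 - y * u 0 - (u 1 - x * u 0) * (y / x) ^ n) / (x - y) := by
    rw [eq_div_iff hsub, div_mul_eq_mul_div, mul_comm, hu.binet, div_pow]
    field_simp
  simp_rw [binet_div]
  simpa using ((hpow.const_mul (u 1 - x * u 0)).const_sub (u 1 - y * u 0)).div_const (x - y)

theorem tendsto_div (hu : HasCharRoots x y u) (hxy : ‖y‖ < ‖x‖) (hcoeff : u 1 - y * u 0 ≠ 0) :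
    Tendsto (fun n => u (n + 1) / u n) atTop (nhds x) := by
  have hx : x ≠ 0 := norm_pos_iff.mp ((norm_nonneg y).trans_lt hxy)
  have hlim : (u 1 - y * u 0) / (x - y) ≠ 0 :=
    div_ne_zero hcoeff <| sub_ne_zero.mpr fun h => hxy.ne (h ▸ rfl)
  have hscaled := hu.tendsto_div_pow hxy
  have hquot := (((tendsto_add_atTop_iff_nat 1).mpr hscaled).div hscaled hlim).const_mul x
  rw [div_self hlim, mul_one] at hquot
  refine hquot.congr fun n => ?_
  simp only [Pi.div_apply, pow_succ]
  field_simp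

end NormedField

end HasCharRoots

/-- The root `-φ / √5` of `X ^ 2 + X + 1 / 5` of larger modulus, the limit of the ratios. -/
noncomputable def dominantRoot : ℝ := -(φ / √5)

/-- The root `ψ / √5` of `X ^ 2 + X + 1 / 5` of smaller modulus, where `ψ = (1 - √5) / 2`. -/
noncomputable def subdominantRoot : ℝ := ψ / √5

theorem dominantRoot_add_subdominantRoot : dominantRoot + subdominantRoot = -1 := by
  rw [dominantRoot, subdominantRoot, ← neg_div, ← add_div, neg_add_eq_sub, ← neg_sub,
    goldenRatio_sub_goldenConj, neg_div, div_self (by positivity)]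

theorem dominantRoot_mul_subdominantRoot : dominantRoot * subdominantRoot = 1 / 5 := by
  rw [dominantRoot, subdominantRoot, neg_mul, div_mul_div_comm, goldenRatio_mul_goldenConj,
    mul_self_sqrt (by norm_num), neg_div, neg_neg]

theorem dominantRoot_sub_subdominantRoot : dominantRoot - subdominantRoot = -(1 / √5) := by
  rw [dominantRoot, subdominantRoot, ← goldenRatio_add_goldenConj]
  ring

theorem subdominantRoot_ne_zero : subdominantRoot ≠ 0 :=
  div_ne_zero goldenConj_ne_zero (by positivity)

theorem dominantRoot_div_subdominantRoot : dominantRoot / subdominantRoot = φ ^ 2 := by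
  rw [dominantRoot, subdominantRoot, neg_div, div_div_div_cancel_right₀ (by positivity),
    div_eq_mul_inv, inv_goldenConj, mul_neg, neg_neg, sq]

theorem norm_subdominantRoot_lt : ‖subdominantRoot‖ < ‖dominantRoot‖ := by
  rw [← one_lt_div (norm_pos_iff.mpr subdominantRoot_ne_zero), ← norm_div,
    dominantRoot_div_subdominantRoot, norm_pow]
  exact one_lt_pow₀ (one_lt_goldenRatio.trans_le (le_abs_self φ)) two_ne_zero

theorem hasCharRoots_fseq :
    HasCharRoots dominantRoot subdominantRoot fun n => (fseq (n + 1) : ℝ) := fun n => by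
  rw [dominantRoot_add_subdominantRoot, dominantRoot_mul_subdominantRoot]
  simp only [fseq]
  push_cast
  ring

-- The value `gseq 0 = 0` extends the recurrence to `0`, so no index shift is needed here.
theorem hasCharRoots_gseq :
    HasCharRoots dominantRoot subdominantRoot fun n => (gseq n : ℝ) := fun n => by
  rw [dominantRoot_add_subdominantRoot, dominantRoot_mul_subdominantRoot]
  cases n <;> simp only [gseq] <;> push_cast <;> ring

theorem fseq_two_sub_subdominantRoot_mul :
    (fseq 2 : ℝ) - subdominantRoot * fseq 1 = -(1 / √5) := by
  rw [← dominantRoot_sub_subdominantRoot]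
  norm_num only [fseq]
  linear_combination -dominantRoot_add_subdominantRoot

theorem fseq_two_sub_dominantRoot_mul : (fseq 2 : ℝ) - dominantRoot * fseq 1 = 1 / √5 := by
  rw [← neg_neg (1 / √5), ← dominantRoot_sub_subdominantRoot]
  norm_num only [fseq]
  linear_combination -dominantRoot_add_subdominantRoot

theorem fseq_ratio_sub_dominantRoot (n : ℕ) :
    (fseq (n + 2) : ℝ) / fseq (n + 1) - dominantRoot = 1 / (√5 * (φ ^ (2 * n) + 1)) := by
  have hden : -(1 / √5) * φ ^ (2 * n) - 1 / √5 = -(1 / √5) * (φ ^ (2 * n) + 1) := by ring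
  have hratio := hasCharRoots_fseq.div_sub_eq subdominantRoot_ne_zero (n := n)
  simp only [zero_add, one_add_one_eq_two, fseq_two_sub_subdominantRoot_mul,
    fseq_two_sub_dominantRoot_mul, dominantRoot_sub_subdominantRoot,
    dominantRoot_div_subdominantRoot, ← pow_mul, hden] at hratio
  rw [hratio (mul_ne_zero (neg_ne_zero.mpr (by positivity)) (by positivity)),
    mul_div_mul_left _ _ (neg_ne_zero.mpr (by positivity)), div_div]

theorem gseq_ratio_sub_dominantRoot {n : ℕ} (hn : n ≠ 0) :
    (gseq (n + 1) : ℝ) / gseq n - dominantRoot = -(1 / (√5 * (φ ^ (2 * n) - 1))) := by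
  have hpow : φ ^ (2 * n) - 1 ≠ 0 :=
    (sub_pos.mpr (one_lt_pow₀ one_lt_goldenRatio (by lia))).ne'
  have hratio := hasCharRoots_gseq.div_sub_eq subdominantRoot_ne_zero (n := n)
  simp only [gseq, Rat.cast_zero, Rat.cast_one, mul_zero, sub_zero, one_mul, mul_one,
    dominantRoot_sub_subdominantRoot, dominantRoot_div_subdominantRoot, ← pow_mul] at hratio
  rw [hratio hpow, neg_div, div_div]

theorem tendsto_fseq_ratio :
    Tendsto (fun r : ℕ => (fseq (r + 1) : ℝ) / fseq r) atTop (nhds dominantRoot) := by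
  have coeff_ne_zero : (fseq 2 : ℝ) - subdominantRoot * fseq 1 ≠ 0 := by
    rw [fseq_two_sub_subdominantRoot_mul, neg_ne_zero]
    positivity
  exact (tendsto_add_atTop_iff_nat 1).mp
    (hasCharRoots_fseq.tendsto_div norm_subdominantRoot_lt coeff_ne_zero)

theorem tendsto_gseq_ratio :
    Tendsto (fun r : ℕ => (gseq (r + 1) : ℝ) / gseq r) atTop (nhds dominantRoot) :=
  hasCharRoots_gseq.tendsto_div norm_subdominantRoot_lt (by simp [gseq])

theorem stmt_6 :
    (∀ r : ℕ, 1 ≤ r →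
      |(fseq (r + 1) : ℝ) / (fseq r : ℝ) + goldenφ / Real.sqrt 5|
        = 1 / (Real.sqrt 5 * (goldenφ ^ (2 * r - 2) + 1)) ∧
      |(gseq (r + 1) : ℝ) / (gseq r : ℝ) + goldenφ / Real.sqrt 5|
        = 1 / (Real.sqrt 5 * (goldenφ ^ (2 * r) - 1))) ∧
    Tendsto (fun r : ℕ => (fseq (r + 1) : ℝ) / (fseq r : ℝ)) atTop
      (nhds (-(goldenφ / Real.sqrt 5))) ∧
    Tendsto (fun r : ℕ => (gseq (r + 1) : ℝ) / (gseq r : ℝ)) atTop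
      (nhds (-(goldenφ / Real.sqrt 5))) := by
  have hφ : goldenφ = φ := rfl
  have hroot : φ / √5 = -dominantRoot := (neg_neg _).symm
  simp only [hφ, hroot, ← sub_eq_add_neg, neg_neg]
  refine ⟨fun r hr => ⟨?_, ?_⟩, tendsto_fseq_ratio, tendsto_gseq_ratio⟩
  · obtain ⟨n, rfl⟩ := Nat.exists_eq_add_of_le' hr
    rw [fseq_ratio_sub_dominantRoot, show 2 * (n + 1) - 2 = 2 * n by lia]
    exact abs_of_pos (by positivity)
  · have hpow : 0 < φ ^ (2 * r) - 1 := sub_pos.mpr (one_lt_pow₀ one_lt_goldenRatio (by lia))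
    rw [gseq_ratio_sub_dominantRoot (by lia), abs_neg]
    exact abs_of_pos (by positivity)
end

section
/- Let f, g be the sequences with f(1) = 2, f(2) = −1, g(1) = 1, g(2) = −1 and f(r+2) = −f(r+1) − f(r)/5, g(r+2) = −g(r+1) − g(r)/5 for r ≥ 1. Then for every r ≥ 1: 5^{r−1}·f(2r−1) = L_{2r−2}, 5^{r−1}·f(2r) = −F_{2r−1}, 5^{r−1}·g(2r−1) = L_{2r−1}, and 5^{r−1}·g(2r) = −F_{2r}. In particular the non-reduced numerators of the two rational sequences consist of interlacing Lucas and (negated) Fibonacci numbers. -/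
/-- The Lucas numbers: `L 0 = 2`, `L 1 = 1`, `L (n+2) = L (n+1) + L n`. -/
def lucas : ℕ → ℕ
  | 0 => 2
  | 1 => 1
  | n + 2 => lucas (n + 1) + lucas n

/-!
Companion Lucas sequences `a = U` and `b = V` with parameter `Q = -1` and discriminant `d` satisfy
`a (n + 2) + a n = b (n + 1)` and `b (n + 2) + b n = d * a (n + 1)`. Because of these two relations
the sequence `b 0, -a 1, b 2 / d, -a 3 / d, b 4 / d ^ 2, …` solves
`x (n + 2) = -x (n + 1) - x n / d`. Fibonacci and Lucas numbers are the case `d = 5`; starting them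
at index `0` gives `fseq`, and starting them at index `1` gives `gseq`.
-/

/- The recurrence is multiplied through by `d`, so that it makes sense in a ring where `d` need not
be invertible. -/
theorem pow_mul_eq_of_interlacing {R : Type*} [CommRing R] {d : R} {a b x : ℕ → R}
    (ha : ∀ n, a (n + 2) + a n = b (n + 1)) (hb : ∀ n, b (n + 2) + b n = d * a (n + 1))
    (hx : ∀ n, d * x (n + 2) = -(d * x (n + 1)) - x n) (hx₀ : x 0 = b 0) (hx₁ : x 1 = -a 1)
    (s : ℕ) :
    d ^ s * x (2 * s) = b (2 * s) ∧ d ^ s * x (2 * s + 1) = -a (2 * s + 1) := by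
  induction s with
  | zero => simp [hx₀, hx₁]
  | succ s ih =>
    obtain ⟨ih_even, ih_odd⟩ := ih
    have h_even : d ^ (s + 1) * x (2 * s + 2) = b (2 * s + 2) := calc
      _ = d ^ s * (d * x (2 * s + 2)) := by ring
      _ = -d * (d ^ s * x (2 * s + 1)) - d ^ s * x (2 * s) := by rw [hx]; ring
      _ = d * a (2 * s + 1) - b (2 * s) := by rw [ih_even, ih_odd]; ring
      _ = b (2 * s + 2) := by rw [← hb]; ring
    have h_odd : d ^ (s + 1) * x (2 * s + 3) = -a (2 * s + 3) := calc
      _ = d ^ s * (d * x (2 * s + 1 + 2)) := by ring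
      _ = -(d ^ (s + 1) * x (2 * s + 2)) - d ^ s * x (2 * s + 1) := by rw [hx]; ring
      _ = -b (2 * s + 2) + a (2 * s + 1) := by rw [h_even, ih_odd]; ring
      _ = -a (2 * s + 3) := by rw [← ha (2 * s + 1)]; ring
    exact ⟨h_even, h_odd⟩

theorem lucas_add_two (n : ℕ) : lucas (n + 2) = lucas (n + 1) + lucas n := rfl

theorem fib_add_two_add_fib (n : ℕ) : Nat.fib (n + 2) + Nat.fib n = lucas (n + 1) := by
  induction n using Nat.twoStepInduction with
  | zero => rfl
  | one => rfl
  | more n ih₀ ih₁ =>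
    rw [lucas_add_two, ← ih₀, ← ih₁, Nat.fib_add_two (n := n + 2), Nat.fib_add_two (n := n)]
    ring

theorem lucas_add_two_add_lucas (n : ℕ) : lucas (n + 2) + lucas n = 5 * Nat.fib (n + 1) := by
  induction n using Nat.twoStepInduction with
  | zero => rfl
  | one => rfl
  | more n ih₀ ih₁ =>
    rw [Nat.fib_add_two, mul_add, ← ih₀, ← ih₁, lucas_add_two (n + 2), lucas_add_two n]
    ring

theorem five_pow_mul_fseq (s : ℕ) :
    (5 : ℚ) ^ s * fseq (2 * s + 1) = lucas (2 * s) ∧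
      (5 : ℚ) ^ s * fseq (2 * s + 2) = -Nat.fib (2 * s + 1) := by
  refine pow_mul_eq_of_interlacing (a := fun n ↦ (Nat.fib n : ℚ)) (b := fun n ↦ (lucas n : ℚ))
    (x := fun n ↦ fseq (n + 1)) (fun n ↦ ?_) (fun n ↦ ?_) (fun n ↦ ?_) ?_ ?_ s
  · exact_mod_cast fib_add_two_add_fib n
  · exact_mod_cast lucas_add_two_add_lucas n
  · rw [fseq]
    ring
  · simp [fseq, lucas]
  · simp [fseq]

theorem five_pow_mul_gseq (s : ℕ) :
    (5 : ℚ) ^ s * gseq (2 * s + 1) = lucas (2 * s + 1) ∧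
      (5 : ℚ) ^ s * gseq (2 * s + 2) = -Nat.fib (2 * s + 2) := by
  refine pow_mul_eq_of_interlacing (a := fun n ↦ (Nat.fib (n + 1) : ℚ))
    (b := fun n ↦ (lucas (n + 1) : ℚ)) (x := fun n ↦ gseq (n + 1))
    (fun n ↦ ?_) (fun n ↦ ?_) (fun n ↦ ?_) ?_ ?_ s
  · exact_mod_cast fib_add_two_add_fib (n + 1)
  · exact_mod_cast lucas_add_two_add_lucas (n + 1)
  · rw [gseq]
    ring
  · simp [gseq, lucas]
  · simp [gseq]

theorem stmt_7 (r : ℕ) (hr : 1 ≤ r) :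
    (5 : ℚ) ^ (r - 1) * fseq (2 * r - 1) = (lucas (2 * r - 2) : ℚ) ∧
    (5 : ℚ) ^ (r - 1) * fseq (2 * r) = -(Nat.fib (2 * r - 1) : ℚ) ∧
    (5 : ℚ) ^ (r - 1) * gseq (2 * r - 1) = (lucas (2 * r - 1) : ℚ) ∧
    (5 : ℚ) ^ (r - 1) * gseq (2 * r) = -(Nat.fib (2 * r) : ℚ) := by
  obtain ⟨s, rfl⟩ : ∃ s, r = s + 1 := Nat.exists_eq_add_of_le' hr
  obtain ⟨hf_odd, hf_even⟩ := five_pow_mul_fseq s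
  obtain ⟨hg_odd, hg_even⟩ := five_pow_mul_gseq s
  exact ⟨hf_odd, hf_even, hg_odd, hg_even⟩
end

section
/- Let m be a positive integer and n = 2m+1. For every integer r and every j with 0 ≤ j ≤ m−1: 𝓕_r^{(m,m−j)} = Σ_{k=0}^{j} binom(j+k+1, 2k+1)·𝓕_{r−k}^{(m,m)} and 𝓖_r^{(m,m−j)} = −Σ_{k=0}^{j} binom(j+k, 2k)·𝓕_{r−k}^{(m,m)}; moreover 𝓕_r^{(m,m)} = −𝓖_r^{(m,m)} for all integers r. -/
open Real Finset Filter

/-- `φ_{m,k} = 2·cos(2πk/(2m+1))`. -/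
noncomputable def phiF (m : ℕ) (k : ℤ) : ℝ := 2 * Real.cos (2 * Real.pi * k / (2 * m + 1))

/-- `μ_{m,k} = φ_{m,k} − 2`. -/
noncomputable def muF (m : ℕ) (k : ℤ) : ℝ := phiF m k - 2

/-- The `m`-dimensional interlacing Fibonacci sequence
`𝓕_r^{(m,j)} = Σ_{t=1}^{m} μ_{m,t}^{−r}·(φ_{m,jt} − φ_{m,(j−1)t})`. -/
noncomputable def Fcal (m : ℕ) (r : ℤ) (j : ℤ) : ℝ :=
  ∑ t ∈ Finset.Icc 1 m, (muF m t) ^ (-r) * (phiF m (j * t) - phiF m ((j - 1) * t))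

/-- The companion sequence
`𝓖_r^{(m,j)} = Σ_{t=1}^{m} μ_{m,t}^{−r}·(φ_{m,(j+1)t} − 2φ_{m,jt} + φ_{m,(j−1)t})`. -/
noncomputable def Gcal (m : ℕ) (r : ℤ) (j : ℤ) : ℝ :=
  ∑ t ∈ Finset.Icc 1 m,
    (muF m t) ^ (-r) * (phiF m ((j + 1) * t) - 2 * phiF m (j * t) + phiF m ((j - 1) * t))

/-!
For fixed `t`, the sequence `u k = φ_{m,kt}` satisfies `u (k + 1) + u (k - 1) = (μ_{m,t} + 2) * u k`
and is symmetric about `m + 1/2`, so `u (m + 1) = u m`. Running the recurrence downwards from `m`,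
the first and second differences of `u` are multiples of `u m - u (m - 1)`, and the multipliers
are the two families of Morgan-Voyce polynomials evaluated at `μ_{m,t}`, whose coefficients are the
binomial coefficients of the theorem. A factor `μ_{m,t} ^ k` is absorbed by `μ_{m,t} ^ (-r)` as a
shift of the index `r` to `r - k`.
-/

section MorganVoyce

variable {R : Type*}

/-- The value at `x` of the Morgan-Voyce polynomial usually written `B_n`, whose coefficients
`(n + k + 1).choose (n - k)` are written here without subtraction. -/
def bigMorganVoyce [CommSemiring R] (x : R) (n : ℕ) : R :=
  ∑ k ∈ range (n + 1), ((n + k + 1).choose (2 * k + 1) : R) * x ^ k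

/-- The value at `x` of the Morgan-Voyce polynomial usually written `b_n`, whose coefficients
`(n + k).choose (n - k)` are written here without subtraction. -/
def smallMorganVoyce [CommSemiring R] (x : R) (n : ℕ) : R :=
  ∑ k ∈ range (n + 1), ((n + k).choose (2 * k) : R) * x ^ k

lemma bigMorganVoyce_zero [CommSemiring R] (x : R) : bigMorganVoyce x 0 = 1 := by
  simp [bigMorganVoyce]

lemma smallMorganVoyce_zero [CommSemiring R] (x : R) : smallMorganVoyce x 0 = 1 := by
  simp [smallMorganVoyce]

lemma bigMorganVoyce_succ [CommSemiring R] (x : R) (n : ℕ) :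
    bigMorganVoyce x (n + 1) = bigMorganVoyce x n + smallMorganVoyce x (n + 1) := by
  have extend_range : bigMorganVoyce x n =
      ∑ k ∈ range (n + 2), ((n + k + 1).choose (2 * k + 1) : R) * x ^ k := by
    rw [sum_range_succ, Nat.choose_eq_zero_of_lt (by lia)]
    simp [bigMorganVoyce]
  have pascal (k : ℕ) : (n + 1 + k + 1).choose (2 * k + 1) =
      (n + k + 1).choose (2 * k + 1) + (n + 1 + k).choose (2 * k) := by
    rw [Nat.choose_succ_succ', add_right_comm n 1 k, add_comm]
  rw [extend_range, bigMorganVoyce, smallMorganVoyce, ← sum_add_distrib]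
  simp only [pascal, Nat.cast_add, add_mul]

lemma smallMorganVoyce_succ [CommSemiring R] (x : R) (n : ℕ) :
    smallMorganVoyce x (n + 1) = smallMorganVoyce x n + x * bigMorganVoyce x n := by
  have split_constant : smallMorganVoyce x n =
      ∑ k ∈ range (n + 1), ((n + k + 1).choose (2 * k + 2) : R) * x ^ (k + 1) + 1 := by
    rw [sum_range_succ, Nat.choose_eq_zero_of_lt (by lia), smallMorganVoyce, sum_range_succ']
    simp [mul_add, add_assoc]
  have pascal (k : ℕ) : (n + 1 + (k + 1)).choose (2 * (k + 1)) =
      (n + k + 1).choose (2 * k + 2) + (n + k + 1).choose (2 * k + 1) := by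
    rw [show n + 1 + (k + 1) = n + k + 1 + 1 by ring, mul_add_one, Nat.choose_succ_succ',
      add_comm]
  rw [split_constant, add_right_comm, bigMorganVoyce, mul_sum, ← sum_add_distrib,
    smallMorganVoyce, sum_range_succ']
  congr 1
  · refine sum_congr rfl fun k _ ↦ ?_
    rw [pascal]
    push_cast
    ring
  · simp

lemma differences_eq_morganVoyce_mul [CommRing R] {x : R} {u : ℤ → R} {N : ℤ}
    (hrec : ∀ k, u (k + 1) + u (k - 1) = (x + 2) * u k) (hsymm : u (N + 1) = u N) (j : ℕ) :
    u (N - j) - u (N - j - 1) = bigMorganVoyce x j * (u N - u (N - 1)) ∧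
      u (N - j + 1) - 2 * u (N - j) + u (N - j - 1) =
        -(smallMorganVoyce x j * (u N - u (N - 1))) := by
  induction j with
  | zero =>
    simp only [Nat.cast_zero, sub_zero, bigMorganVoyce_zero, smallMorganVoyce_zero, hsymm]
    constructor <;> ring
  | succ j ih =>
    obtain ⟨hfirst, hsecond⟩ := ih
    have hrec_upper := hrec (N - j)
    have hrec_lower := hrec (N - j - 1)
    rw [sub_add_cancel] at hrec_lower
    rw [Nat.cast_succ, ← sub_sub, sub_add_cancel, bigMorganVoyce_succ, smallMorganVoyce_succ]
    constructor
    · linear_combination (1 + x) * hfirst - hsecond + hrec_upper - hrec_lower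
    · linear_combination hsecond - x * hfirst + hrec_lower - hrec_upper

end MorganVoyce

section Nodes

variable (m : ℕ)

lemma phiF_add_add_phiF_sub (a b : ℤ) :
    phiF m (a + b) + phiF m (a - b) = phiF m b * phiF m a := by
  simp only [phiF, Int.cast_add, Int.cast_sub, mul_add, mul_sub, add_div, sub_div, cos_add, cos_sub]
  ring

lemma phiF_add_one_mul_add_phiF_sub_one_mul (t k : ℤ) :
    phiF m ((k + 1) * t) + phiF m ((k - 1) * t) = (muF m t + 2) * phiF m (k * t) := by
  rw [add_one_mul, sub_one_mul, phiF_add_add_phiF_sub, muF, sub_add_cancel]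

lemma phiF_period_mul_sub (t k : ℤ) : phiF m ((2 * m + 1) * t - k) = phiF m k := by
  have angle : 2 * π * (((2 * m + 1) * t - k : ℤ) : ℝ) / (2 * m + 1) =
      t * (2 * π) - 2 * π * k / (2 * m + 1) := by
    push_cast
    field_simp
  rw [phiF, phiF, angle, cos_int_mul_two_pi_sub]

lemma phiF_add_one_mul_eq (t : ℤ) : phiF m ((m + 1) * t) = phiF m (m * t) := by
  rw [← phiF_period_mul_sub m t (m * t)]
  ring_nf

lemma phiF_differences_eq_morganVoyce_mul (t : ℤ) (j : ℕ) :
    phiF m ((m - j) * t) - phiF m ((m - j - 1) * t) =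
        bigMorganVoyce (muF m t) j * (phiF m (m * t) - phiF m ((m - 1) * t)) ∧
      phiF m ((m - j + 1) * t) - 2 * phiF m ((m - j) * t) + phiF m ((m - j - 1) * t) =
        -(smallMorganVoyce (muF m t) j * (phiF m (m * t) - phiF m ((m - 1) * t))) :=
  differences_eq_morganVoyce_mul (u := fun k ↦ phiF m (k * t))
    (phiF_add_one_mul_add_phiF_sub_one_mul m t) (phiF_add_one_mul_eq m t) j

lemma muF_eq_zero_iff (k : ℤ) : muF m k = 0 ↔ (2 * m + 1 : ℤ) ∣ k := by
  have muF_eq_zero_iff_cos : muF m k = 0 ↔ cos (2 * π * k / (2 * m + 1)) = 1 := by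
    rw [muF, phiF]
    constructor <;> intro h <;> linarith
  rw [muF_eq_zero_iff_cos, cos_eq_one_iff]
  refine exists_congr fun q ↦ ?_
  rw [eq_div_iff (by positivity), ← @Int.cast_inj ℝ]
  push_cast
  constructor <;> intro h
  · exact mul_left_cancel₀ two_pi_pos.ne' (by linear_combination -h)
  · linear_combination -(2 * π) * h

lemma muF_ne_zero_of_mem_Icc {t : ℕ} (ht : t ∈ Icc 1 m) : muF m t ≠ 0 := by
  rw [mem_Icc] at ht
  rw [Ne, muF_eq_zero_iff]
  intro hdvd
  have := Int.le_of_dvd (by lia) hdvd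
  lia

end Nodes

section InterlacingFibonacci

variable (m : ℕ) (r : ℤ)

lemma sum_mul_Fcal_sub (s : Finset ℕ) (a : ℕ → ℝ) (i : ℤ) :
    ∑ k ∈ s, a k * Fcal m (r - k) i =
      ∑ t ∈ Icc 1 m, muF m t ^ (-r) *
        ((∑ k ∈ s, a k * muF m t ^ k) * (phiF m (i * t) - phiF m ((i - 1) * t))) := by
  simp_rw [Fcal, sum_mul, mul_sum]
  rw [sum_comm]
  refine sum_congr rfl fun t ht ↦ sum_congr rfl fun k _ ↦ ?_
  have shift : muF m t ^ (-(r - k)) = muF m t ^ (-r) * muF m t ^ k := by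
    rw [neg_sub', sub_neg_eq_add, zpow_add₀ (muF_ne_zero_of_mem_Icc m ht), zpow_natCast]
  rw [shift]
  ring

lemma Fcal_sub_eq_sum (j : ℕ) :
    Fcal m r (m - j) =
      ∑ k ∈ range (j + 1), ((j + k + 1).choose (2 * k + 1) : ℝ) * Fcal m (r - k) m := by
  rw [sum_mul_Fcal_sub, Fcal]
  exact sum_congr rfl fun t _ ↦ congrArg _ (phiF_differences_eq_morganVoyce_mul m t j).1

lemma Gcal_sub_eq_neg_sum (j : ℕ) :
    Gcal m r (m - j) =
      -∑ k ∈ range (j + 1), ((j + k).choose (2 * k) : ℝ) * Fcal m (r - k) m := by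
  rw [sum_mul_Fcal_sub, Gcal, ← sum_neg_distrib]
  refine sum_congr rfl fun t _ ↦ ?_
  rw [← mul_neg]
  exact congrArg _ (phiF_differences_eq_morganVoyce_mul m t j).2

lemma Fcal_self_eq_neg_Gcal_self : Fcal m r m = -Gcal m r m := by
  simpa using (congrArg Neg.neg (Gcal_sub_eq_neg_sum m r 0)).symm

end InterlacingFibonacci

theorem stmt_8_general (m : ℕ) :
    (∀ r : ℤ, ∀ j : ℕ,
      Fcal m r ((m : ℤ) - j) =
        ∑ k ∈ Finset.range (j + 1),
          (Nat.choose (j + k + 1) (2 * k + 1) : ℝ) * Fcal m (r - k) m ∧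
      Gcal m r ((m : ℤ) - j) =
        -∑ k ∈ Finset.range (j + 1),
          (Nat.choose (j + k) (2 * k) : ℝ) * Fcal m (r - k) m) ∧
    (∀ r : ℤ, Fcal m r m = -Gcal m r m) :=
  ⟨fun r j ↦ ⟨Fcal_sub_eq_sum m r j, Gcal_sub_eq_neg_sum m r j⟩, Fcal_self_eq_neg_Gcal_self m⟩

theorem stmt_8 (m : ℕ) (hm : 0 < m) :
    (∀ r : ℤ, ∀ j : ℕ, j + 1 ≤ m →
      Fcal m r ((m : ℤ) - j) =
        ∑ k ∈ Finset.range (j + 1),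
          (Nat.choose (j + k + 1) (2 * k + 1) : ℝ) * Fcal m (r - k) m ∧
      Gcal m r ((m : ℤ) - j) =
        -∑ k ∈ Finset.range (j + 1),
          (Nat.choose (j + k) (2 * k) : ℝ) * Fcal m (r - k) m) ∧
    (∀ r : ℤ, Fcal m r m = -Gcal m r m) := by
  exact ⟨fun r j _ ↦ (stmt_8_general m).1 r j, (stmt_8_general m).2⟩
end

section
/- Let m be a positive integer, n = 2m+1, and let j, k satisfy 1 ≤ j ≤ m and 1 ≤ k ≤ m. Then the sequence of real numbers r ↦ 𝓕_r^{(m,j)} / 𝓕_r^{(m,k)} (r ranging over the positive integers) converges, as r → ∞, to (φ_{m,j} − φ_{m,j−1}) / (φ_{m,k} − φ_{m,k−1}) = (2·cos(2πj/n) − 2·cos(2π(j−1)/n)) / (2·cos(2πk/n) − 2·cos(2π(k−1)/n)). -/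
open Real Finset Filter

/-!
Among `μ_{m,1}, …, μ_{m,m}` the smallest in absolute value is `μ_{m,1}`, because
`|μ_{m,t}| = 2 - φ_{m,t}` and the cosine decreases on `[0, π]`. After multiplication by
`μ_{m,1}^r`, every term of `𝓕_r^{(m,j)}` therefore decays geometrically except the one with
`t = 1`, which is constantly `φ_{m,j} - φ_{m,j-1}`.
-/

section DominantTerm

variable {ι 𝕜 : Type*} [NormedField 𝕜] {s : Finset ι} {x : ι → 𝕜} {i₀ : ι}

theorem tendsto_pow_mul_sum_zpow_neg_mul (hi₀ : i₀ ∈ s) (hx : x i₀ ≠ 0)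
    (hlt : ∀ i ∈ s, i ≠ i₀ → ‖x i₀‖ < ‖x i‖) (c : ι → 𝕜) :
    Tendsto (fun r : ℕ => x i₀ ^ r * ∑ i ∈ s, x i ^ (-r : ℤ) * c i) atTop (nhds (c i₀)) := by
  classical
  have hterm : ∀ i ∈ s, Tendsto (fun r : ℕ => (x i₀ / x i) ^ r * c i) atTop
      (nhds (if i = i₀ then c i else 0)) := by
    intro i hi
    split_ifs with h
    · simp [h, div_self hx]
    · have hratio : ‖x i₀ / x i‖ < 1 := by
        rw [norm_div]
        exact (div_lt_one ((norm_nonneg _).trans_lt (hlt i hi h))).2 (hlt i hi h)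
      simpa using (tendsto_pow_atTop_nhds_zero_of_norm_lt_one hratio).mul_const (c i)
  have hsum := tendsto_finsetSum s hterm
  rw [Finset.sum_ite_eq', if_pos hi₀] at hsum
  refine hsum.congr fun r => ?_
  simp only [Finset.mul_sum, zpow_neg, zpow_natCast, div_pow, ← mul_assoc, ← div_eq_mul_inv]

theorem tendsto_sum_zpow_neg_mul_div (hi₀ : i₀ ∈ s) (hx : x i₀ ≠ 0)
    (hlt : ∀ i ∈ s, i ≠ i₀ → ‖x i₀‖ < ‖x i‖) (c : ι → 𝕜) {d : ι → 𝕜} (hd : d i₀ ≠ 0) :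
    Tendsto (fun r : ℕ => (∑ i ∈ s, x i ^ (-r : ℤ) * c i) / ∑ i ∈ s, x i ^ (-r : ℤ) * d i)
      atTop (nhds (c i₀ / d i₀)) :=
  ((tendsto_pow_mul_sum_zpow_neg_mul hi₀ hx hlt c).div
    (tendsto_pow_mul_sum_zpow_neg_mul hi₀ hx hlt d) hd).congr
    fun r => mul_div_mul_left _ _ (pow_ne_zero r hx)

end DominantTerm

theorem phiF_zero_left (k : ℤ) : phiF 0 k = 2 := by
  simp [phiF, mul_comm (2 * π)]

theorem strictAntiOn_phiF (m : ℕ) : StrictAntiOn (phiF m) (Set.Icc 0 m) := by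
  rintro a ⟨ha, -⟩ b ⟨-, hb⟩ hab
  have ha' : (0 : ℝ) ≤ a := mod_cast ha
  have hb' : (b : ℝ) ≤ m := mod_cast hb
  have hangle : 2 * π * b / (2 * m + 1) ≤ π := by
    rw [div_le_iff₀ (by positivity)]
    nlinarith [pi_pos]
  have hcos : cos (2 * π * b / (2 * m + 1)) < cos (2 * π * a / (2 * m + 1)) :=
    cos_lt_cos_of_nonneg_of_le_pi
      (div_nonneg (mul_nonneg two_pi_pos.le ha') (by positivity)) hangle (by gcongr)
  unfold phiF
  linarith

theorem norm_muF (m : ℕ) (k : ℤ) : ‖muF m k‖ = 2 - phiF m k := by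
  have hphi : phiF m k ≤ 2 := by
    unfold phiF
    linarith [cos_le_one (2 * π * k / (2 * m + 1))]
  rw [muF, Real.norm_of_nonpos (by linarith), neg_sub]

theorem strictMonoOn_norm_muF (m : ℕ) : StrictMonoOn (fun t => ‖muF m t‖) (Set.Icc 0 m) := by
  intro a ha b hb hab
  simpa only [norm_muF, sub_lt_sub_iff_left] using strictAntiOn_phiF m ha hb hab

theorem muF_ne_zero {m : ℕ} {t : ℤ} (ht : 0 < t) (htm : t ≤ m) : muF m t ≠ 0 :=
  norm_pos_iff.1 <| (norm_nonneg _).trans_lt <|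
    strictMonoOn_norm_muF m ⟨le_rfl, ht.le.trans htm⟩ ⟨ht.le, htm⟩ ht

theorem stmt_11_general {m : ℕ} (j : ℤ) {k : ℤ} (hk : phiF m k ≠ phiF m (k - 1)) :
    Tendsto (fun r : ℕ => Fcal m r j / Fcal m r k) atTop
      (nhds ((phiF m j - phiF m (j - 1)) / (phiF m k - phiF m (k - 1)))) := by
  have hm : 1 ≤ m := by
    by_contra! hm
    obtain rfl : m = 0 := by omega
    exact hk (by simp only [phiF_zero_left])
  have hmin : ∀ t ∈ Icc 1 m, t ≠ 1 → ‖muF m (1 : ℕ)‖ < ‖muF m t‖ := by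
    intro t ht ht1
    rw [Finset.mem_Icc] at ht
    exact strictMonoOn_norm_muF m ⟨by omega, by omega⟩ ⟨by omega, by omega⟩ (by omega)
  have hlim := tendsto_sum_zpow_neg_mul_div (x := fun t : ℕ => muF m t) (i₀ := 1)
    (Finset.mem_Icc.2 ⟨le_rfl, hm⟩) (muF_ne_zero (by omega) (by omega)) hmin
    (fun t => phiF m (j * t) - phiF m ((j - 1) * t))
    (d := fun t => phiF m (k * t) - phiF m ((k - 1) * t)) (by simpa [sub_ne_zero] using hk)
  simpa only [Fcal, Nat.cast_one, mul_one] using hlim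

theorem stmt_11 (m : ℕ) (hm : 0 < m) (j k : ℕ) (hj1 : 1 ≤ j) (hjm : j ≤ m)
    (hk1 : 1 ≤ k) (hkm : k ≤ m) :
    Tendsto (fun r : ℕ => Fcal m r j / Fcal m r k) atTop
      (nhds ((phiF m j - phiF m ((j : ℤ) - 1)) / (phiF m k - phiF m ((k : ℤ) - 1)))) :=
  stmt_11_general j
    (strictAntiOn_phiF m ⟨by omega, by omega⟩ ⟨by omega, by omega⟩ (by omega)).ne
end

section
/- Let m be a positive integer, n = 2m+1, r ≥ 0 an integer, and 1 ≤ j ≤ m. Then n·𝔉(2r+1, (r+j) mod n) = Σ_{t=1}^{m} μ_{m,t}^{r}·(φ_{m,jt} − φ_{m,(j−1)t}) = 𝓕_{−r}^{(m,j)}, and n·𝔉(2r+2, (r+j+1) mod n) = Σ_{t=1}^{m} μ_{m,t}^{r}·(φ_{m,(j+1)t} − 2φ_{m,jt} + φ_{m,(j−1)t}) = 𝓖_{−r}^{(m,j)}. Here the left-hand sides are integers multiplied by n, and the equalities hold in the real numbers. -/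
open Real Finset Filter

/-- The Fleck number `𝔉(N, a mod n) = Σ_{0 ≤ k ≤ N, k ≡ a (mod n)} (−1)^k·binom(N,k)`. -/
def fleck (N n : ℕ) (a : ℤ) : ℤ :=
  ∑ k ∈ Finset.range (N + 1),
    if (k : ℤ) ≡ a [ZMOD (n : ℤ)] then (-1) ^ k * (Nat.choose N k) else 0

/-!
Put `n = 2m + 1` and `ζ = exp (2πi/n)`. The roots of unity filter gives
`n·𝔉(2r, r + a mod n) = ∑_{t mod n} ζ^{-(r+a)t} (1 - ζ^t)^{2r}`, and
`ζ^{-t} (1 - ζ^t)² = ζ^t - 2 + ζ^{-t} = μ_{m,t}`. Pairing `t` with `-t` leaves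
`0^r + ∑_{t=1}^m μ_{m,t}^r φ_{m,at}`, the term `0^r` coming from `t = 0`. This identity is proved by
induction on `r`: both sides evolve by a second difference in `a`, on the left by Pascal's rule
and on the right because multiplication by `μ_{m,t}` takes the second difference of `φ_{m,at}`.
The odd rows are first differences in `a` of the even ones, which cancels `0^r`.
-/

theorem fleck_zero_left (n : ℕ) (a : ℤ) : fleck 0 n a = if (n : ℤ) ∣ a then 1 else 0 := by
  simp [fleck, Int.modEq_iff_dvd]

theorem fleck_succ_left (N n : ℕ) (a : ℤ) :
    fleck (N + 1) n a = fleck N n a - fleck N n (a - 1) := by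
  have modEq_shift (k : ℕ) : ((k + 1 : ℕ) : ℤ) ≡ a [ZMOD n] ↔ (k : ℤ) ≡ a - 1 [ZMOD n] := by
    rw [Int.modEq_iff_dvd, Int.modEq_iff_dvd, Nat.cast_succ, sub_add_eq_sub_sub_swap]
  have sign_shift (k : ℕ) :
      (if ((k + 1 : ℕ) : ℤ) ≡ a [ZMOD n] then (-1 : ℤ) ^ (k + 1) else 0) =
        -(if (k : ℤ) ≡ a - 1 [ZMOD n] then (-1) ^ k else 0) := by
    simp only [modEq_shift, pow_succ, mul_neg_one, neg_ite, neg_zero]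
  have pascal := sum_choose_succ_mul
    (fun k _ ↦ if (k : ℤ) ≡ a [ZMOD n] then (-1 : ℤ) ^ k else 0) N
  simp only [sign_shift, mul_neg, sum_neg_distrib, ← sub_eq_add_neg] at pascal
  simpa only [fleck, mul_comm (Nat.cast _), ite_mul, zero_mul] using pascal

theorem fleck_add_two_left (N n : ℕ) (a : ℤ) :
    fleck (N + 2) n (a + 1) = fleck N n (a + 1) - 2 * fleck N n a + fleck N n (a - 1) := by
  rw [fleck_succ_left (N + 1), fleck_succ_left N, fleck_succ_left N, add_sub_cancel_right]
  ring

theorem one_add_sum_two_mul_cos (m : ℕ) {x : ℝ} (hx : ∀ k : ℤ, x ≠ k * (2 * π)) :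
    1 + ∑ t ∈ Icc 1 m, 2 * cos (t * x) = sin ((2 * m + 1) * x / 2) / sin (x / 2) := by
  have sin_ne_zero : sin (x / 2) ≠ 0 := fun h ↦ by
    obtain ⟨k, hk⟩ := sin_eq_zero_iff.mp h
    exact hx k (by linarith)
  have sum_shift : ∑ t ∈ Icc 1 m, cos (t * x) = ∑ i ∈ range m, cos (x * i + x) := by
    rw [← Ico_add_one_right_eq_Icc, sum_Ico_eq_sum_range, Nat.add_sub_cancel]
    refine sum_congr rfl fun i _ ↦ ?_
    push_cast
    ring_nf
  have product_to_sum : 2 * sin (m * x / 2) * cos ((m - 1) * x / 2 + x) =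
      sin ((2 * m + 1) * x / 2) - sin (x / 2) := by
    rw [two_mul_sin_mul_cos, sub_eq_neg_add (sin _), ← sin_neg]
    congr 2 <;> ring
  rw [← mul_sum, sum_shift, sum_cos m hx, mul_div_assoc', ← mul_assoc, product_to_sum, sub_div,
    div_self sin_ne_zero, add_sub_cancel]

theorem phiF_of_dvd {m : ℕ} {a : ℤ} (h : ((2 * m + 1 : ℕ) : ℤ) ∣ a) : phiF m a = 2 := by
  obtain ⟨c, rfl⟩ := h
  have angle_eq : 2 * π * (((2 * m + 1 : ℕ) * c : ℤ) : ℝ) / (2 * m + 1) = c * (2 * π) := by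
    push_cast
    field_simp
  rw [phiF, angle_eq, cos_int_mul_two_pi, mul_one]

theorem one_add_sum_phiF_mul_of_not_dvd {m : ℕ} {a : ℤ} (h : ¬ ((2 * m + 1 : ℕ) : ℤ) ∣ a) :
    1 + ∑ t ∈ Icc 1 m, phiF m (a * t) = 0 := by
  set x : ℝ := 2 * π * a / (2 * m + 1) with hx
  have x_ne (k : ℤ) : x ≠ k * (2 * π) := fun hk ↦ h ⟨k, by
    have a_eq : (a : ℝ) = (2 * m + 1) * k := by
      rw [hx] at hk
      field_simp at hk
      linarith
    exact_mod_cast a_eq⟩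
  have phiF_eq (t : ℕ) : phiF m (a * t) = 2 * cos (t * x) := by
    rw [phiF, hx]
    push_cast
    ring_nf
  have half_angle : (2 * m + 1) * x / 2 = a * π := by
    rw [hx]
    field_simp
  simp only [phiF_eq, one_add_sum_two_mul_cos m x_ne, half_angle, sin_int_mul_pi, zero_div]

theorem one_add_sum_phiF_mul (m : ℕ) (a : ℤ) :
    1 + ∑ t ∈ Icc 1 m, phiF m (a * t) =
      if ((2 * m + 1 : ℕ) : ℤ) ∣ a then (2 * m + 1 : ℝ) else 0 := by
  split_ifs with h
  · simp only [phiF_of_dvd (h.mul_right _), sum_const, Nat.card_Icc, nsmul_eq_mul]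
    push_cast [Nat.add_sub_cancel]
    ring
  · exact one_add_sum_phiF_mul_of_not_dvd h

theorem phiF_mul_phiF (m : ℕ) (a b : ℤ) :
    phiF m a * phiF m b = phiF m (a + b) + phiF m (a - b) := by
  simp only [phiF, Int.cast_add, Int.cast_sub, mul_add, mul_sub, add_div, sub_div, cos_add,
    cos_sub]
  ring

theorem muF_mul_phiF_mul (m : ℕ) (a t : ℤ) :
    muF m t * phiF m (a * t) =
      phiF m ((a + 1) * t) - 2 * phiF m (a * t) + phiF m ((a - 1) * t) := by
  rw [muF, sub_mul, mul_comm (phiF m t), phiF_mul_phiF, add_one_mul, sub_one_mul]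
  ring

theorem fleck_two_mul (m r : ℕ) (a : ℤ) :
    (2 * m + 1 : ℝ) * fleck (2 * r) (2 * m + 1) (r + a) =
      0 ^ r + ∑ t ∈ Icc 1 m, muF m t ^ r * phiF m (a * t) := by
  induction r generalizing a with
  | zero => simp [fleck_zero_left, one_add_sum_phiF_mul]
  | succ r ih =>
    have fleck_recurrence :
        fleck (2 * (r + 1)) (2 * m + 1) ((r + 1 : ℕ) + a) =
          fleck (2 * r) (2 * m + 1) (r + (a + 1)) - 2 * fleck (2 * r) (2 * m + 1) (r + a) +
            fleck (2 * r) (2 * m + 1) (r + (a - 1)) := by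
      rw [Nat.cast_succ, add_right_comm, mul_add_one, fleck_add_two_left, add_assoc,
        add_sub_assoc]
    have sum_recurrence :
        ∑ t ∈ Icc 1 m, muF m t ^ (r + 1) * phiF m (a * t) =
          ∑ t ∈ Icc 1 m, muF m t ^ r * phiF m ((a + 1) * t) -
            2 * ∑ t ∈ Icc 1 m, muF m t ^ r * phiF m (a * t) +
            ∑ t ∈ Icc 1 m, muF m t ^ r * phiF m ((a - 1) * t) := by
      simp only [pow_succ, mul_assoc, muF_mul_phiF_mul, mul_add, mul_sub, sum_add_distrib,
        sum_sub_distrib, mul_sum, mul_left_comm]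
    rw [fleck_recurrence, sum_recurrence, zero_pow r.succ_ne_zero]
    push_cast
    linear_combination ih (a + 1) - 2 * ih a + ih (a - 1)

theorem fleck_two_mul_add_one (m r : ℕ) (j : ℤ) :
    (2 * m + 1 : ℝ) * fleck (2 * r + 1) (2 * m + 1) (r + j) =
      ∑ t ∈ Icc 1 m, muF m t ^ r * (phiF m (j * t) - phiF m ((j - 1) * t)) := by
  rw [fleck_succ_left, add_sub_assoc, Int.cast_sub, mul_sub, fleck_two_mul, fleck_two_mul,
    add_sub_add_left_eq_sub, ← sum_sub_distrib]
  simp only [mul_sub]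

theorem fleck_two_mul_add_two (m r : ℕ) (j : ℤ) :
    (2 * m + 1 : ℝ) * fleck (2 * r + 2) (2 * m + 1) (r + j + 1) =
      ∑ t ∈ Icc 1 m,
        muF m t ^ r * (phiF m ((j + 1) * t) - 2 * phiF m (j * t) + phiF m ((j - 1) * t)) := by
  have even_row := fleck_two_mul m (r + 1) j
  rw [zero_pow r.succ_ne_zero, zero_add, Nat.cast_succ, add_right_comm, mul_add_one] at even_row
  simpa only [pow_succ, mul_assoc, muF_mul_phiF_mul] using even_row

theorem Fcal_neg_natCast (m r : ℕ) (j : ℤ) :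
    Fcal m (-r) j =
      ∑ t ∈ Icc 1 m, muF m t ^ r * (phiF m (j * t) - phiF m ((j - 1) * t)) := by
  simp only [Fcal, neg_neg, zpow_natCast]

theorem Gcal_neg_natCast (m r : ℕ) (j : ℤ) :
    Gcal m (-r) j =
      ∑ t ∈ Icc 1 m,
        muF m t ^ r * (phiF m ((j + 1) * t) - 2 * phiF m (j * t) + phiF m ((j - 1) * t)) := by
  simp only [Gcal, neg_neg, zpow_natCast]

theorem stmt_12_general (m r : ℕ) (j : ℤ) :
    (2 * m + 1 : ℝ) * (fleck (2 * r + 1) (2 * m + 1) ((r : ℤ) + j) : ℝ) =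
        ∑ t ∈ Finset.Icc 1 m, (muF m t) ^ r * (phiF m (j * t) - phiF m ((j - 1) * t)) ∧
    (∑ t ∈ Finset.Icc 1 m, (muF m t) ^ r * (phiF m (j * t) - phiF m ((j - 1) * t)))
        = Fcal m (-(r : ℤ)) j ∧
    (2 * m + 1 : ℝ) * (fleck (2 * r + 2) (2 * m + 1) ((r : ℤ) + j + 1) : ℝ) =
        ∑ t ∈ Finset.Icc 1 m,
          (muF m t) ^ r *
            (phiF m ((j + 1) * t) - 2 * phiF m (j * t) + phiF m ((j - 1) * t)) ∧
    (∑ t ∈ Finset.Icc 1 m,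
        (muF m t) ^ r *
          (phiF m ((j + 1) * t) - 2 * phiF m (j * t) + phiF m ((j - 1) * t)))
        = Gcal m (-(r : ℤ)) j :=
  ⟨fleck_two_mul_add_one m r j, (Fcal_neg_natCast m r j).symm,
    fleck_two_mul_add_two m r j, (Gcal_neg_natCast m r j).symm⟩

theorem stmt_12 (m : ℕ) (hm : 0 < m) (r : ℕ) (j : ℕ) (hj1 : 1 ≤ j) (hjm : j ≤ m) :
    ((2 * m + 1 : ℝ)) * (fleck (2 * r + 1) (2 * m + 1) ((r : ℤ) + j) : ℝ) =
        ∑ t ∈ Finset.Icc 1 m, (muF m t) ^ r * (phiF m (j * t) - phiF m (((j : ℤ) - 1) * t)) ∧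
    (∑ t ∈ Finset.Icc 1 m, (muF m t) ^ r * (phiF m (j * t) - phiF m (((j : ℤ) - 1) * t)))
        = Fcal m (-(r : ℤ)) j ∧
    ((2 * m + 1 : ℝ)) * (fleck (2 * r + 2) (2 * m + 1) ((r : ℤ) + j + 1) : ℝ) =
        ∑ t ∈ Finset.Icc 1 m,
          (muF m t) ^ r *
            (phiF m ((j + 1) * t) - 2 * phiF m (j * t) + phiF m (((j : ℤ) - 1) * t)) ∧
    (∑ t ∈ Finset.Icc 1 m,
        (muF m t) ^ r *
          (phiF m ((j + 1) * t) - 2 * phiF m (j * t) + phiF m (((j : ℤ) - 1) * t)))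
        = Gcal m (-(r : ℤ)) j :=
  stmt_12_general m r j
end

section
/- Let m be a positive integer such that p = 2m+1 is prime. Then for every integer r and every j with 1 ≤ j ≤ m, the real number p^{⌊(r−1)/m⌋} · 𝓕_r^{(m,j)} is an integer; that is, there exists z ∈ ℤ with p^{⌊(r−1)/m⌋} · Σ_{t=1}^{m} μ_{m,t}^{−r}·(φ_{m,jt} − φ_{m,(j−1)t}) = z, where ⌊·⌋ denotes the floor of the rational number (r−1)/m and the power of p is an integer power (possibly negative). -/
open Real Finset Filter

/-!
Every `φ_{m,kt}` is the value at `φ_{m,t}` of a fixed integer polynomial, the rescaled Chebyshev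
polynomial `C_k`, and `X - 2` divides `C_k - 2`, so `μ_{m,t}` divides `μ_{m,kt}` with a quotient in
`ℤ[φ_{m,t}]` given by a polynomial that does not depend on `t`. Since `∏ μ_{m,t} = ± (2m+1)`, when
`p = 2m+1` is prime `p` and `μ_{m,t} ^ m` are associated in this sense, uniformly in `t`; hence
`p ^ e * μ_{m,t} ^ (-r)` is an integer polynomial in `φ_{m,t}` whenever `r ≤ m * e`. The last factor
of `p` is gained from the trace: `∑ P(φ_{m,t}) ≡ m * P(2)` modulo `2m+1` for every `P ∈ ℤ[X]`, and
`P(2) = 0` here because `φ_{m,jt} - φ_{m,(j-1)t}` contributes a factor `X - 2`.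
-/

open Polynomial

namespace InterlacingFibonacci

@[to_additive]
theorem prod_range_eq_prod_Icc_mul_neg {M : Type*} [CommMonoid M] {m : ℕ} {f : ℤ → M}
    (hf : Function.Periodic f (2 * m + 1)) :
    ∏ i ∈ range (2 * m), f (i + 1) = ∏ t ∈ Icc 1 m, f t * f (-t) := by
  have lower : ∏ i ∈ range m, f ((i : ℕ) + 1) = ∏ t ∈ Icc 1 m, f t := by
    rw [range_eq_Ico, ← Ico_add_one_right_eq_Icc, ← prod_Ico_add' (fun t : ℕ => f t) 0 m 1]
    simp only [Nat.cast_add, Nat.cast_one]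
  have upper : ∏ i ∈ range m, f ((m + i : ℕ) + 1) = ∏ t ∈ Icc 1 m, f (-t) := by
    refine prod_nbij' (m - ·) (m - ·) ?_ ?_ ?_ ?_ fun i hi => ?_
    any_goals (simp only [mem_range, mem_Icc]; omega)
    have hi' := mem_range.1 hi
    rw [← hf.sub_eq']
    congr 1
    omega
  rw [two_mul, prod_range_add, lower, upper, prod_mul_distrib]

theorem X_sub_two_dvd_chebyshev_C_sub_two (R : Type*) [CommRing R] (k : ℤ) :
    (X - 2 : R[X]) ∣ Chebyshev.C R k - 2 := by
  have hroot : (Chebyshev.C R k - 2).IsRoot 2 := by simp [Chebyshev.C_eval_two]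
  simpa only [map_ofNat] using dvd_iff_isRoot.2 hroot

theorem zpow_periodic {G : Type*} [GroupWithZero G] {w : G} {n : ℤ} (hw0 : w ≠ 0)
    (hw : w ^ n = 1) : Function.Periodic (fun k : ℤ => w ^ k) n := by
  intro k
  simp only [zpow_add₀ hw0, hw, mul_one]

variable {m : ℕ}

theorem ne_zero_of_prime_two_mul_add_one (hp : (2 * m + 1).Prime) : m ≠ 0 := by
  rintro rfl
  exact Nat.not_prime_one hp

theorem phiF_periodic (m : ℕ) : Function.Periodic (phiF m) (2 * m + 1) := by
  intro k
  have hn : (2 * m + 1 : ℝ) ≠ 0 := by positivity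
  have hangle : 2 * π * ((k + (2 * m + 1) : ℤ) : ℝ) / (2 * m + 1)
      = 2 * π * k / (2 * m + 1) + 2 * π := by
    push_cast
    field_simp
  rw [phiF, phiF, hangle, Real.cos_add_two_pi]

theorem exists_isPrimitiveRoot_ofReal_phiF (m : ℕ) :
    ∃ ζ : ℂ, IsPrimitiveRoot ζ (2 * m + 1) ∧
      ∀ k : ℤ, (phiF m k : ℂ) = ζ ^ k + ζ ^ (-k) := by
  refine ⟨_, Complex.isPrimitiveRoot_exp (2 * m + 1) (by omega), fun k => ?_⟩
  rw [← Complex.exp_int_mul, ← Complex.exp_int_mul, phiF]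
  push_cast
  rw [Complex.two_cos]
  congr 2 <;> ring

theorem aeval_phiF_chebyshev_C (k t : ℤ) :
    aeval (phiF m t) (Chebyshev.C ℤ k) = phiF m (k * t) := by
  rw [Chebyshev.aeval_C, phiF, Chebyshev.C_two_mul_real_cos, phiF]
  congr 2
  push_cast
  ring

theorem aeval_phiF_X_sub_two (t : ℤ) : aeval (phiF m t) (X - 2 : ℤ[X]) = muF m t := by
  rw [map_sub, aeval_X, map_ofNat, muF]

theorem exists_muF_mul_eq (k : ℤ) :
    ∃ Q : ℤ[X], ∀ (m : ℕ) (t : ℤ), muF m (k * t) = muF m t * aeval (phiF m t) Q := by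
  obtain ⟨Q, hQ⟩ := X_sub_two_dvd_chebyshev_C_sub_two ℤ k
  refine ⟨Q, fun m t => ?_⟩
  rw [← aeval_phiF_X_sub_two t, ← map_mul, ← hQ, map_sub, aeval_phiF_chebyshev_C, map_ofNat, muF]

theorem sum_phiF_mul_modEq (m : ℕ) (k : ℤ) :
    ∑ t ∈ Icc 1 m, phiF m (k * t) ≡ 2 * m [PMOD (2 * m + 1 : ℝ)] := by
  obtain ⟨ζ, hζ, hphi⟩ := exists_isPrimitiveRoot_ofReal_phiF m
  have hpow : (ζ ^ k) ^ (2 * m + 1) = 1 := by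
    rw [← zpow_natCast, zpow_comm, zpow_natCast, hζ.pow_eq_one, one_zpow]
  have hζk : ζ ^ k ≠ 0 := zpow_ne_zero k (hζ.ne_zero (by omega))
  have hsum : ((∑ t ∈ Icc 1 m, phiF m (k * t) : ℝ) : ℂ)
      = ∑ i ∈ range (2 * m), (ζ ^ k) ^ (i + 1) := by
    have hpair := sum_range_eq_sum_Icc_add_neg (zpow_periodic hζk (n := 2 * m + 1) (mod_cast hpow))
    push_cast
    simp only [hphi, zpow_mul, ← mul_neg, ← hpair]
    norm_cast
  rcases eq_or_ne (ζ ^ k) 1 with hone | hne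
  · have hval : ∑ t ∈ Icc 1 m, phiF m (k * t) = 2 * m :=
      Complex.ofReal_injective (by rw [hsum, hone]; simp)
    rw [hval]
  · have hgeom : ∑ i ∈ range (2 * m + 1), (ζ ^ k) ^ i = 0 := by
      rw [geom_sum_eq hne, hpow, sub_self, zero_div]
    rw [sum_range_succ', pow_zero] at hgeom
    have hval : ∑ t ∈ Icc 1 m, phiF m (k * t) = -1 :=
      Complex.ofReal_injective (by rw [hsum, eq_neg_of_add_eq_zero_left hgeom]; simp)
    rw [hval, AddCommGroup.modEq_iff_zsmul]
    exact ⟨1, by rw [one_smul]; ring⟩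

theorem prod_muF_mul {k : ℤ} (hk : IsCoprime k (2 * m + 1)) :
    ∏ t ∈ Icc 1 m, muF m (k * t) = (-1) ^ m * (2 * m + 1) := by
  obtain ⟨ζ, hζ, hphi⟩ := exists_isPrimitiveRoot_ofReal_phiF m
  have hw : IsPrimitiveRoot (ζ ^ k) (2 * m + 1) :=
    hζ.zpow_of_gcd_eq_one k (Int.isCoprime_iff_gcd_eq_one.1 (by exact_mod_cast hk))
  have hw0 : ζ ^ k ≠ 0 := hw.ne_zero (by omega)
  have hfactor (t : ℤ) :
      (muF m (k * t) : ℂ) = -1 * ((1 - (ζ ^ k) ^ t) * (1 - (ζ ^ k) ^ (-t))) := by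
    have hcancel : (ζ ^ k) ^ t * (ζ ^ k) ^ (-t) = 1 := by
      rw [zpow_neg, mul_inv_cancel₀ (zpow_ne_zero t hw0)]
    rw [muF, Complex.ofReal_sub, hphi, ← mul_neg, zpow_mul, zpow_mul]
    push_cast
    linear_combination hcancel
  have hpair := prod_range_eq_prod_Icc_mul_neg
    ((zpow_periodic hw0 (n := 2 * m + 1) (mod_cast hw.pow_eq_one)).comp (1 - ·))
  simp only [Function.comp_apply] at hpair
  apply Complex.ofReal_injective
  push_cast
  simp only [hfactor, prod_mul_distrib (f := fun _ => (-1 : ℂ)), ← hpair, prod_const, Nat.card_Icc,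
    Nat.add_sub_cancel]
  congr 1
  exact_mod_cast hw.prod_one_sub_pow_eq_order

theorem sum_aeval_phiF_X_pow_mul_chebyshev_C_modEq (m i : ℕ) (k : ℤ) :
    ∑ t ∈ Icc 1 m, aeval (phiF m t) (X ^ i * Chebyshev.C ℤ k)
      ≡ m * aeval (2 : ℝ) (X ^ i * Chebyshev.C ℤ k) [PMOD (2 * m + 1 : ℝ)] := by
  induction i generalizing k with
  | zero =>
    simp only [pow_zero, one_mul, aeval_phiF_chebyshev_C]
    rw [Chebyshev.aeval_C, Chebyshev.C_eval_two, mul_comm (m : ℝ)]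
    exact sum_phiF_mul_modEq m k
  | succ i ih =>
    have hrec : (X ^ (i + 1) * Chebyshev.C ℤ k : ℤ[X])
        = X ^ i * Chebyshev.C ℤ (k + 1) + X ^ i * Chebyshev.C ℤ (k - 1) := by
      rw [Chebyshev.C_add_one]
      ring
    simp only [hrec, map_add, sum_add_distrib, mul_add]
    exact (ih _).add (ih _)

theorem sum_aeval_phiF_modEq (m : ℕ) (P : ℤ[X]) :
    ∑ t ∈ Icc 1 m, aeval (phiF m t) P ≡ m * aeval (2 : ℝ) P [PMOD (2 * m + 1 : ℝ)] := by
  induction P using Polynomial.induction_on' with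
  | add P Q hP hQ =>
    simp only [map_add, sum_add_distrib, mul_add]
    exact hP.add hQ
  | monomial i a =>
    have hX : ∑ t ∈ Icc 1 m, aeval (phiF m t) (X ^ i : ℤ[X])
        ≡ m * aeval (2 : ℝ) (X ^ i : ℤ[X]) [PMOD (2 * m + 1 : ℝ)] := by
      cases i with
      | zero => simp
      | succ i =>
        simpa only [Chebyshev.C_one, ← pow_succ]
          using sum_aeval_phiF_X_pow_mul_chebyshev_C_modEq m i 1
    rw [← smul_X_eq_monomial]
    simp only [map_zsmul, ← smul_sum, mul_smul_comm]
    exact (hX.zsmul (z := a)).of_zsmul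

theorem exists_muF_pow_mul_eq (m : ℕ) :
    ∃ U : ℤ[X], ∀ s : ℤ, IsCoprime s (2 * m + 1) →
      muF m s ^ m * aeval (phiF m s) U = 2 * m + 1 := by
  choose Q hQ using exists_muF_mul_eq
  refine ⟨(-1) ^ m * ∏ t ∈ Icc 1 m, Q t, fun s hs => ?_⟩
  have hprod : muF m s ^ m * ∏ t ∈ Icc 1 m, aeval (phiF m s) (Q t) = (-1) ^ m * (2 * m + 1) := by
    rw [← prod_muF_mul hs]
    simp only [mul_comm s, hQ, prod_mul_distrib, prod_const, Nat.card_Icc, Nat.add_sub_cancel]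
  simp only [map_mul, map_pow, map_neg, map_one, map_prod]
  rw [mul_left_comm, hprod, ← mul_assoc, ← mul_pow, neg_one_mul, neg_neg, one_pow, one_mul]

theorem isCoprime_of_mem_Icc (hp : (2 * m + 1).Prime) {t : ℕ} (ht : t ∈ Icc 1 m) :
    IsCoprime (t : ℤ) (2 * m + 1) := by
  have hbounds := mem_Icc.1 ht
  exact_mod_cast Nat.isCoprime_iff_coprime.2
    (Nat.coprime_of_lt_prime (by omega) (by omega) hp).symm

theorem exists_muF_eq_muF_mul_mul {k : ℤ} (hk : IsCoprime k (2 * m + 1)) :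
    ∃ Q : ℤ[X], ∀ s : ℤ, muF m s = muF m (s * k) * aeval (phiF m s) Q := by
  obtain ⟨a, b, hab⟩ := hk
  obtain ⟨Q, hQ⟩ := exists_muF_mul_eq a
  refine ⟨Q.comp (Chebyshev.C ℤ k), fun s => ?_⟩
  have hinv : a * (k * s) + (b * s) * (2 * m + 1) = s := by linear_combination s * hab
  have hphi : phiF m s = phiF m (a * (k * s)) := by
    simpa only [Int.cast_id, hinv] using (phiF_periodic m).int_mul (b * s) (a * (k * s))
  rw [aeval_comp, aeval_phiF_chebyshev_C, mul_comm s, ← hQ, muF, muF, hphi]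

theorem exists_muF_pow_eq_mul (hp : (2 * m + 1).Prime) :
    ∃ V : ℤ[X], ∀ s : ℤ, IsCoprime s (2 * m + 1) →
      muF m s ^ m = (2 * m + 1) * aeval (phiF m s) V := by
  have hdvd (t : ℕ) (ht : t ∈ Icc 1 m) :
      ∃ Q : ℤ[X], ∀ s : ℤ, muF m s = muF m (s * t) * aeval (phiF m s) Q :=
    exists_muF_eq_muF_mul_mul (isCoprime_of_mem_Icc hp ht)
  choose! Q hQ using hdvd
  refine ⟨(-1) ^ m * ∏ t ∈ Icc 1 m, Q t, fun s hs => ?_⟩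
  calc muF m s ^ m = ∏ t ∈ Icc 1 m, muF m (s * t) * aeval (phiF m s) (Q t) := by
        rw [← prod_congr rfl fun t ht => hQ t ht s, prod_const, Nat.card_Icc, Nat.add_sub_cancel]
    _ = (2 * m + 1) * aeval (phiF m s) ((-1) ^ m * ∏ t ∈ Icc 1 m, Q t) := by
        simp only [prod_mul_distrib, prod_muF_mul hs, map_mul, map_pow, map_neg, map_one, map_prod]
        ring

theorem muF_ne_zero (hm : m ≠ 0) {s : ℤ} (hs : IsCoprime s (2 * m + 1)) : muF m s ≠ 0 := by
  obtain ⟨U, hU⟩ := exists_muF_pow_mul_eq m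
  have hn : (2 * m + 1 : ℝ) ≠ 0 := by positivity
  exact (pow_ne_zero_iff hm).1 (left_ne_zero_of_mul (hU s hs ▸ hn))

theorem exists_zpow_eq_muF_pow_zpow_mul (hp : (2 * m + 1).Prime) (e : ℤ) :
    ∃ W : ℤ[X], ∀ s : ℤ, IsCoprime s (2 * m + 1) →
      (2 * m + 1 : ℝ) ^ e = (muF m s ^ m) ^ e * aeval (phiF m s) W := by
  obtain ⟨n, rfl | rfl⟩ := e.eq_nat_or_neg
  · obtain ⟨U, hU⟩ := exists_muF_pow_mul_eq m
    refine ⟨U ^ n, fun s hs => ?_⟩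
    rw [map_pow, zpow_natCast, zpow_natCast, ← mul_pow, hU s hs]
  · obtain ⟨V, hV⟩ := exists_muF_pow_eq_mul hp
    refine ⟨V ^ n, fun s hs => ?_⟩
    have hmu : muF m s ≠ 0 := muF_ne_zero (ne_zero_of_prime_two_mul_add_one hp) hs
    have hV0 : aeval (phiF m s) V ≠ 0 := right_ne_zero_of_mul (hV s hs ▸ pow_ne_zero m hmu)
    rw [hV s hs, map_pow, zpow_neg, zpow_neg, zpow_natCast, zpow_natCast, mul_pow, mul_inv,
      inv_mul_cancel_right₀ (pow_ne_zero n hV0)]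

theorem exists_zpow_mul_muF_zpow_neg_eq (hp : (2 * m + 1).Prime) {r e : ℤ} (hre : r ≤ m * e) :
    ∃ P : ℤ[X], ∀ s : ℤ, IsCoprime s (2 * m + 1) →
      (2 * m + 1 : ℝ) ^ e * muF m s ^ (-r) = aeval (phiF m s) P := by
  obtain ⟨W, hW⟩ := exists_zpow_eq_muF_pow_zpow_mul hp e
  obtain ⟨d, hd⟩ := Int.le.dest hre
  refine ⟨(X - 2) ^ d * W, fun s hs => ?_⟩
  have hmu : muF m s ≠ 0 := muF_ne_zero (ne_zero_of_prime_two_mul_add_one hp) hs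
  have hexp : (muF m s ^ m) ^ e * muF m s ^ (-r) = muF m s ^ d := by
    rw [← zpow_natCast, ← zpow_mul, ← zpow_add₀ hmu, ← zpow_natCast, ← hd]
    congr 1
    ring
  rw [hW s hs, mul_right_comm, hexp, map_mul, map_pow, aeval_phiF_X_sub_two]

theorem exists_phiF_sub_phiF_eq (j : ℤ) :
    ∃ D : ℤ[X], ∀ (m : ℕ) (t : ℤ),
      phiF m (j * t) - phiF m ((j - 1) * t) = muF m t * aeval (phiF m t) D := by
  obtain ⟨Q, hQ⟩ := exists_muF_mul_eq j
  obtain ⟨Q', hQ'⟩ := exists_muF_mul_eq (j - 1)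
  refine ⟨Q - Q', fun m t => ?_⟩
  rw [map_sub, mul_sub, ← hQ, ← hQ', muF, muF, sub_sub_sub_cancel_right]

theorem exists_int_zpow_mul_Fcal_eq (hp : (2 * m + 1).Prime) {r e : ℤ} (hre : r ≤ m * (e + 1))
    (j : ℤ) : ∃ z : ℤ, (2 * m + 1 : ℝ) ^ e * Fcal m r j = z := by
  obtain ⟨P, hP⟩ := exists_zpow_mul_muF_zpow_neg_eq hp hre
  obtain ⟨D, hD⟩ := exists_phiF_sub_phiF_eq j
  have hn : (2 * m + 1 : ℝ) ≠ 0 := by positivity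
  have hsum : (2 * m + 1) * ((2 * m + 1 : ℝ) ^ e * Fcal m r j)
      = ∑ t ∈ Icc 1 m, aeval (phiF m t) ((X - 2) * (P * D)) := by
    rw [← mul_assoc, ← zpow_one_add₀ hn, add_comm 1 e, Fcal, mul_sum]
    refine sum_congr rfl fun t ht => ?_
    rw [← mul_assoc, hP t (isCoprime_of_mem_Icc hp ht), hD, map_mul, map_mul, aeval_phiF_X_sub_two]
    ring
  have hmod := sum_aeval_phiF_modEq m ((X - 2) * (P * D))
  rw [← hsum, map_mul, map_sub, aeval_X, map_ofNat, sub_self, zero_mul, mul_zero,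
    AddCommGroup.modEq_zero_iff_eq_zsmul] at hmod
  obtain ⟨z, hz⟩ := hmod
  exact ⟨z, mul_left_cancel₀ hn (by rw [hz, zsmul_eq_mul, mul_comm])⟩

end InterlacingFibonacci

theorem stmt_13_general (m : ℕ) (hp : Nat.Prime (2 * m + 1)) (r j : ℤ) :
    ∃ z : ℤ, (2 * m + 1 : ℝ) ^ ⌊((r : ℚ) - 1) / (m : ℚ)⌋ * Fcal m r j = z := by
  have hm : (0 : ℚ) < m :=
    Nat.cast_pos.2 (InterlacingFibonacci.ne_zero_of_prime_two_mul_add_one hp).bot_lt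
  refine InterlacingFibonacci.exists_int_zpow_mul_Fcal_eq hp ?_ j
  have hlt := Int.lt_floor_add_one (((r : ℚ) - 1) / m)
  rw [div_lt_iff₀ hm, mul_comm, sub_lt_iff_lt_add] at hlt
  exact Int.lt_add_one_iff.1 (by exact_mod_cast hlt)

theorem stmt_13 (m : ℕ) (hm : 0 < m) (hp : Nat.Prime (2 * m + 1)) (r : ℤ) (j : ℕ)
    (hj1 : 1 ≤ j) (hjm : j ≤ m) :
    ∃ z : ℤ,
      (2 * m + 1 : ℝ) ^ (⌊((r : ℚ) - 1) / (m : ℚ)⌋) *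
        (∑ t ∈ Finset.Icc 1 m,
          (muF m t) ^ (-r) * (phiF m (j * t) - phiF m (((j : ℤ) - 1) * t))) = (z : ℝ) :=
  stmt_13_general m hp r j
end

section
/- Let m be a positive integer, n = 2m+1, and r ≥ 0 an integer. Then 𝔉(4r+1, (2r+1) mod n) = −Σ_{j=1}^{m} ( 𝔉(2r+1, (r+j) mod n) )². Equivalently, Σ_{a∈ℤ} (−1)^a · binom(4r+1, 2r+1+an) = Σ_{j=1}^{m} ( Σ_{a∈ℤ} (−1)^{r+j+a} · binom(2r+1, r+j+an) )², where binom(N,k) = 0 unless 0 ≤ k ≤ N, so all sums are finite. -/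
open Finset

/-!
The Fleck numbers `𝔉(N, a mod n)` are the coefficients of `(1 - x) ^ N` in the group ring of
`ZMod n`, where `x` is the generator. Comparing coefficients of `x ^ N` in
`(1 - x) ^ N * (1 - x) ^ N = (1 - x) ^ (2 * N)`, and using the symmetry
`𝔉(N, N - a) = (-1) ^ N * 𝔉(N, a)`, expresses `𝔉(2 * N, N) = 2 * 𝔉(2 * N - 1, N)` as
`(-1) ^ N` times the sum of the squares of all `𝔉(N, a)`. For `N = 2 * r + 1` the residues
`r + j` and `r + 1 - j` contribute the same square, and a self-paired residue contributes `0`, so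
the sum is twice the sum over `1 ≤ j ≤ n / 2`.
-/

section GroupRing

variable (n : ℕ)

/-- The Fleck number of a residue class `a : ZMod n`, encoded as the coefficient of `x ^ a` in
`(1 - x) ^ N`, where `x = single 1 1` is the generator of the group ring `ℤ[ZMod n]`. -/
noncomputable def fleckCoeff (N : ℕ) (a : ZMod n) : ℤ :=
  ((1 - .single 1 1 : AddMonoidAlgebra ℤ (ZMod n)) ^ N).coeff a

theorem fleck_eq_fleckCoeff (N : ℕ) (a : ℤ) : fleck N n a = fleckCoeff n N a := by
  have binomial : (1 - .single 1 1 : AddMonoidAlgebra ℤ (ZMod n)) ^ N =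
      ∑ k ∈ range (N + 1), .single (k : ZMod n) ((-1) ^ k * (N.choose k : ℤ)) := by
    rw [sub_eq_neg_add, add_pow]
    refine sum_congr rfl fun k _ => ?_
    rw [one_pow, mul_one, ← AddMonoidAlgebra.single_neg, AddMonoidAlgebra.single_pow,
      nsmul_one, ← nsmul_eq_mul', AddMonoidAlgebra.smul_single, nsmul_eq_mul']
  simp only [fleckCoeff, binomial, AddMonoidAlgebra.coeff_sum, Finsupp.finsetSum_apply,
    AddMonoidAlgebra.coeff_single, Finsupp.single_apply, fleck, ← ZMod.intCast_eq_intCast_iff,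
    Int.cast_natCast]

theorem fleckCoeff_succ (N : ℕ) (a : ZMod n) :
    fleckCoeff n (N + 1) a = fleckCoeff n N a - fleckCoeff n N (a - 1) := by
  rw [fleckCoeff, pow_succ, mul_sub, mul_one]
  simp [fleckCoeff, sub_eq_add_neg]

theorem fleckCoeff_reflect (N : ℕ) (a : ZMod n) :
    fleckCoeff n N (N - a) = (-1) ^ N * fleckCoeff n N a := by
  induction N generalizing a with
  | zero => simp [fleckCoeff, AddMonoidAlgebra.one_def, Finsupp.single_apply, eq_comm]
  | succ N ih =>
    have left : ((N + 1 : ℕ) : ZMod n) - a = N - (a - 1) := by push_cast; ring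
    have right : (N : ZMod n) - (a - 1) - 1 = N - a := by ring
    rw [fleckCoeff_succ, fleckCoeff_succ, left, right, ih, ih]
    ring

variable [NeZero n]

theorem sum_fleckCoeff_mul_fleckCoeff (M N : ℕ) (a : ZMod n) :
    ∑ c, fleckCoeff n M c * fleckCoeff n N (a - c) = fleckCoeff n (M + N) a := by
  rw [fleckCoeff, pow_add, AddMonoidAlgebra.coeff_mul, Finsupp.sum_fintype _ _ (by simp)]
  refine sum_congr rfl fun c _ => ?_
  rw [Finsupp.sum_fintype _ _ (by simp)]
  simp [fleckCoeff, ← eq_sub_iff_add_eq']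

theorem sum_fleckCoeff_sq (N : ℕ) :
    ∑ c, fleckCoeff n N c ^ 2 = (-1) ^ N * fleckCoeff n (2 * N) N := by
  rw [two_mul, ← sum_fleckCoeff_mul_fleckCoeff, mul_sum]
  refine sum_congr rfl fun c _ => ?_
  have sign_sq : ((-1 : ℤ) ^ N) ^ 2 = 1 := by rw [← pow_mul']; simp
  rw [fleckCoeff_reflect]
  linear_combination -fleckCoeff n N c ^ 2 * sign_sq

end GroupRing

theorem fleckCoeff_two_mul_add_two (n N : ℕ) :
    fleckCoeff n (2 * N + 2) (N + 1) = 2 * fleckCoeff n (2 * N + 1) (N + 1) := by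
  have center : ((2 * N + 1 : ℕ) : ZMod n) - (N + 1) = N + 1 - 1 := by push_cast; ring
  have reflect := fleckCoeff_reflect n (2 * N + 1) (N + 1)
  rw [center, (odd_two_mul_add_one N).neg_one_pow] at reflect
  rw [fleckCoeff_succ, reflect]
  ring

theorem fleckCoeff_add_one_sub_eq_neg (n r : ℕ) (c : ZMod n) :
    fleckCoeff n (2 * r + 1) (r + (1 - c)) = -fleckCoeff n (2 * r + 1) (r + c) := by
  have reflect := fleckCoeff_reflect n (2 * r + 1) (r + c)
  rw [(odd_two_mul_add_one r).neg_one_pow, neg_one_mul] at reflect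
  rw [← reflect]
  congr 1
  push_cast
  ring

section Folding

variable {M : Type*} [AddCommMonoid M]

theorem sum_range_eq_two_nsmul_of_palindrome {n : ℕ} {f : ℕ → M}
    (symm : ∀ i < n, f (n - 1 - i) = f i) (middle : ∀ i, 2 * i + 1 = n → f i = 0) :
    ∑ i ∈ range n, f i = 2 • ∑ i ∈ range (n / 2), f i := by
  have upper_half : ∑ i ∈ range (n / 2), f (n - n / 2 + i) = ∑ i ∈ range (n / 2), f i := by
    rw [← sum_range_reflect]
    refine sum_congr rfl fun i hi => ?_
    rw [mem_range] at hi
    rw [← symm i (by lia)]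
    congr 1
    lia
  have lower_half : ∑ i ∈ range (n - n / 2), f i = ∑ i ∈ range (n / 2), f i := by
    obtain ⟨k, rfl | rfl⟩ := n.even_or_odd'
    · congr 2
      lia
    · rw [show 2 * k + 1 - (2 * k + 1) / 2 = k + 1 by lia, sum_range_succ, middle k rfl, add_zero,
        show (2 * k + 1) / 2 = k by lia]
  rw [two_nsmul]
  nth_rw 1 [← lower_half]
  rw [← upper_half, ← sum_range_add, Nat.sub_add_cancel (Nat.div_le_self n 2)]

theorem sum_range_natCast_eq_sum_zmod (n : ℕ) [NeZero n] (f : ZMod n → M) :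
    ∑ i ∈ range n, f i = ∑ c, f c :=
  sum_bij' (fun i _ => (i : ZMod n)) (fun c _ => c.val) (by simp) (by simp [ZMod.val_lt])
    (fun i hi => ZMod.val_natCast_of_lt (mem_range.mp hi)) (by simp) (by simp)

theorem sum_zmod_eq_two_nsmul_of_reflect {n : ℕ} [NeZero n] {f : ZMod n → M}
    (reflect : ∀ c, f (1 - c) = f c) (fixed : ∀ c, 1 - c = c → f c = 0) :
    ∑ c, f c = 2 • ∑ j ∈ Icc 1 (n / 2), f j := by
  have palindrome (i : ℕ) (hi : i < n) : f ((n - 1 - i + 1 : ℕ)) = f ((i + 1 : ℕ)) := by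
    rw [← reflect, show n - 1 - i + 1 = n - i by lia, Nat.cast_sub hi.le]
    simp [add_comm]
  have middle (i : ℕ) (hi : 2 * i + 1 = n) : f ((i + 1 : ℕ)) = 0 := by
    have modulus : ((2 * i + 1 : ℕ) : ZMod n) = 0 := by rw [hi, ZMod.natCast_self]
    refine fixed _ ?_
    push_cast at modulus ⊢
    linear_combination -modulus
  calc ∑ c, f c = ∑ i ∈ range n, f ((i + 1 : ℕ)) := by
        rw [← Equiv.sum_comp (Equiv.addRight 1) f, ← sum_range_natCast_eq_sum_zmod]
        simp
    _ = 2 • ∑ i ∈ range (n / 2), f ((i + 1 : ℕ)) :=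
        sum_range_eq_two_nsmul_of_palindrome palindrome middle
    _ = 2 • ∑ j ∈ Icc 1 (n / 2), f j := by
        rw [range_eq_Ico, sum_Ico_add' (fun j : ℕ => f j), zero_add, Ico_add_one_right_eq_Icc]

end Folding

theorem sum_fleckCoeff_sq_eq_two_mul_sum_Icc (n : ℕ) [NeZero n] (r : ℕ) :
    ∑ c, fleckCoeff n (2 * r + 1) c ^ 2 =
      2 * ∑ j ∈ Icc 1 (n / 2), fleckCoeff n (2 * r + 1) (r + j) ^ 2 := by
  rw [← Equiv.sum_comp (Equiv.addLeft (r : ZMod n))]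
  simp only [Equiv.coe_addLeft]
  rw [sum_zmod_eq_two_nsmul_of_reflect (fun c => ?_) (fun c hc => ?_), nsmul_eq_mul,
    Nat.cast_ofNat]
  · rw [fleckCoeff_add_one_sub_eq_neg, neg_sq]
  · have vanish := fleckCoeff_add_one_sub_eq_neg n r c
    rw [hc, self_eq_neg] at vanish
    rw [vanish, zero_pow two_ne_zero]

theorem stmt_16_general (n : ℕ) [NeZero n] (r : ℕ) :
    fleck (4 * r + 1) n (2 * (r : ℤ) + 1) =
      -∑ j ∈ Icc 1 (n / 2), fleck (2 * r + 1) n ((r : ℤ) + j) ^ 2 := by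
  have doubled : 2 * fleckCoeff n (4 * r + 1) (2 * r + 1) =
      -∑ c, fleckCoeff n (2 * r + 1) c ^ 2 := by
    rw [sum_fleckCoeff_sq, (odd_two_mul_add_one r).neg_one_pow, neg_one_mul, neg_neg]
    have double := fleckCoeff_two_mul_add_two n (2 * r)
    push_cast at double ⊢
    rw [mul_add_one, double, ← mul_assoc]
    norm_num
  rw [sum_fleckCoeff_sq_eq_two_mul_sum_Icc] at doubled
  simp only [fleck_eq_fleckCoeff]
  push_cast
  linarith

theorem stmt_16 (m : ℕ) (hm : 0 < m) (r : ℕ) :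
    fleck (4 * r + 1) (2 * m + 1) (2 * (r : ℤ) + 1) =
      -∑ j ∈ Finset.Icc 1 m, (fleck (2 * r + 1) (2 * m + 1) ((r : ℤ) + j)) ^ 2 := by
  have half_modulus : (2 * m + 1) / 2 = m := by lia
  simpa only [half_modulus] using stmt_16_general (2 * m + 1) r
end
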